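/- arXiv:2212.08644 — 3 statements merged into one kernel-verified Lean document; each statement's English description precedes it below -/
import Mathlib

section
/- Let A be a commutative ring and I ⊆ A an ideal, and let f₁, f₂ ∈ A be such that every prime ideal p of A with I ⊆ p and f₂ ∉ p also satisfies f₁ ∉ p (i.e. D(f₂) ∩ V(I) ⊆ D(f₁) ∩ V(I) in Spec A). Let B₁ be an A-algebra together with an A-algebra homomorphism from the localization A_{f₁} exhibiting B₁ as a Henselization of the pair (A_{f₁}, I·A_{f₁}), and similarly let B₂ be a Henselization of (A_{f₂}, I·A_{f₂}). Then there exists a unique A-algebra homomorphism B₁ → B₂. -/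
universe u

/-- A ring homomorphism `ρ : R →+* H` exhibits `H` as a Henselization of the pair `(R, K)`:
`(H, K·H)` is a Henselian pair, and every map from `(R, K)` to a Henselian pair factors
uniquely through `ρ`. -/
def IsHenselization {R H : Type u} [CommRing R] [CommRing H]
    (K : Ideal R) (ρ : R →+* H) : Prop :=
  HenselianRing H (K.map ρ) ∧
    ∀ (C : Type u) [CommRing C] (J : Ideal C), HenselianRing C J →
      ∀ f : R →+* C, K.map f ≤ J → ∃! g : H →+* C, g.comp ρ = f

/-- `φ : A →+* B` is Henselian finitely presented (hfp) with respect to `I`: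
`B` is a Henselization of `(R, I·R)` for some finitely presented `A`-algebra `R`. -/
def IsHfp {A B : Type u} [CommRing A] [CommRing B] (φ : A →+* B) (I : Ideal A) : Prop :=
  ∃ (R : Type u) (_ : CommRing R) (ψ : A →+* R) (ρ : R →+* B),
    ψ.FinitePresentation ∧ ρ.comp ψ = φ ∧ IsHenselization (I.map ψ) ρ

/-- `φ : A →+* B` is h-formally étale with respect to `I`. -/
def IsHFormallyEtale {A B : Type u} [CommRing A] [CommRing B] (φ : A →+* B) (I : Ideal A) :
    Prop :=
  ∀ (E C : Type u) [CommRing E] [CommRing C] (e : A →+* E) (c : A →+* C)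
    (p : E →+* C) (u : B →+* C),
    p.comp e = c → u.comp φ = c →
    (∃ N : ℕ, 1 ≤ N ∧ Ideal.map e (I ^ N) = ⊥ ∧ Ideal.map c (I ^ N) = ⊥) →
    Function.Surjective p →
    (∃ M : ℕ, 1 ≤ M ∧ RingHom.ker p ^ M = ⊥) →
    ∃! v : B →+* E, v.comp φ = e ∧ p.comp v = u

/-- `φ : A →+* B` is h-formally smooth with respect to `I`. -/
def IsHFormallySmooth {A B : Type u} [CommRing A] [CommRing B] (φ : A →+* B) (I : Ideal A) :
    Prop :=
  ∀ (E C : Type u) [CommRing E] [CommRing C] (e : A →+* E) (c : A →+* C)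
    (p : E →+* C) (u : B →+* C),
    p.comp e = c → u.comp φ = c →
    (∃ N : ℕ, 1 ≤ N ∧ Ideal.map e (I ^ N) = ⊥ ∧ Ideal.map c (I ^ N) = ⊥) →
    Function.Surjective p →
    (∃ M : ℕ, 1 ≤ M ∧ RingHom.ker p ^ M = ⊥) →
    ∃ v : B →+* E, v.comp φ = e ∧ p.comp v = u

/-- `φ : A →+* B` is h-étale with respect to `I`: `B` is a Henselization of `(R, I·R)`
for some étale `A`-algebra `R`. -/
def IsHEtale {A B : Type u} [CommRing A] [CommRing B] (φ : A →+* B) (I : Ideal A) : Prop :=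
  ∃ (R : Type u) (_ : CommRing R) (_ : Algebra A R) (ρ : R →+* B),
    Algebra.Etale A R ∧ ρ.comp (algebraMap A R) = φ ∧
      IsHenselization (I.map (algebraMap A R)) ρ

/-- `φ : A →+* B` is h-smooth with respect to `I`: `B` is a Henselization of `(R, I·R)`
for some smooth `A`-algebra `R`. -/
def IsHSmooth {A B : Type u} [CommRing A] [CommRing B] (φ : A →+* B) (I : Ideal A) : Prop :=
  ∃ (R : Type u) (_ : CommRing R) (_ : Algebra A R) (ρ : R →+* B),
    Algebra.Smooth A R ∧ ρ.comp (algebraMap A R) = φ ∧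
      IsHenselization (I.map (algebraMap A R)) ρ

/-- A ring homomorphism is flat if it makes the target into a flat module over the source. -/
def RingHomFlat {A C : Type u} [CommRing A] [CommRing C] (f : A →+* C) : Prop :=
  letI := f.toAlgebra
  Module.Flat A C

/-- A ring homomorphism is smooth if it makes the target into a smooth algebra over the
source (smooth = formally smooth + finitely presented). -/
def RingHomSmooth {A C : Type u} [CommRing A] [CommRing C] (f : A →+* C) : Prop :=
  letI := f.toAlgebra
  Algebra.Smooth A C

/-- A ring homomorphism is étale if it makes the target into an étale algebra over the
source (étale = formally étale + finitely presented). -/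
def RingHomEtale {A C : Type u} [CommRing A] [CommRing C] (f : A →+* C) : Prop :=
  letI := f.toAlgebra
  Algebra.Etale A C

/-- If `D(f₂) ∩ V(I) ⊆ D(f₁) ∩ V(I)` in `Spec A`, and `B₁`, `B₂` are Henselizations of
`(A_{f₁}, I·A_{f₁})` and `(A_{f₂}, I·A_{f₂})` respectively, then there is a unique
`A`-algebra homomorphism `B₁ → B₂`. -/
theorem unique_map_between_henselizations_of_away
    {A B₁ B₂ : Type u} [CommRing A] [CommRing B₁] [CommRing B₂]
    (I : Ideal A) (f₁ f₂ : A)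
    (hsub : ∀ p : Ideal A, p.IsPrime → I ≤ p → f₂ ∉ p → f₁ ∉ p)
    (ρ₁ : Localization.Away f₁ →+* B₁) (ρ₂ : Localization.Away f₂ →+* B₂)
    (h₁ : IsHenselization (I.map (algebraMap A (Localization.Away f₁))) ρ₁)
    (h₂ : IsHenselization (I.map (algebraMap A (Localization.Away f₂))) ρ₂) :
    ∃! g : B₁ →+* B₂,
      g.comp (ρ₁.comp (algebraMap A (Localization.Away f₁))) =
        ρ₂.comp (algebraMap A (Localization.Away f₂)) := by
  set φ₂ : A →+* B₂ := ρ₂.comp (algebraMap A (Localization.Away f₂)) with hφ₂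
  obtain ⟨hH, -⟩ := h₂
  obtain ⟨-, hU⟩ := h₁
  have hunit : IsUnit (φ₂ f₁) := by
    by_contra hn
    obtain ⟨m, hm, hfm⟩ := exists_max_ideal_of_mem_nonunits hn
    have hp : (m.comap φ₂).IsPrime := by
      have := hm.isPrime
      exact Ideal.comap_isPrime φ₂ m
    refine hsub (m.comap φ₂) hp ?_ ?_ hfm
    · intro a ha
      have h1 : φ₂ a ∈ (I.map (algebraMap A (Localization.Away f₂))).map ρ₂ :=
        Ideal.mem_map_of_mem _ (Ideal.mem_map_of_mem _ ha)
      have h2 := hH.jac h1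
      rw [Ideal.jacobson, Ideal.mem_sInf] at h2
      exact h2 ⟨bot_le, hm⟩
    · intro hf
      have hu : IsUnit (φ₂ f₂) :=
        (IsLocalization.Away.algebraMap_isUnit (S := Localization.Away f₂) f₂).map ρ₂
      exact hm.ne_top (Ideal.eq_top_of_isUnit_mem _ hf hu)
  let ψ : Localization.Away f₁ →+* B₂ := IsLocalization.Away.lift f₁ hunit
  have hψ : ψ.comp (algebraMap A (Localization.Away f₁)) = φ₂ :=
    IsLocalization.Away.lift_comp f₁ hunit
  obtain ⟨g, hg, hgu⟩ := hU B₂ _ hH ψ (by rw [Ideal.map_map, Ideal.map_map, hψ])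
  refine ⟨g, ?_, ?_⟩
  · show g.comp _ = _
    rw [← RingHom.comp_assoc, hg, hψ]
  · intro g' hg'
    apply hgu
    apply IsLocalization.ringHom_ext (Submonoid.powers f₁)
    rw [hψ, RingHom.comp_assoc]
    exact hg'
end

section
/- Let (A, I) be a Henselian pair. Let B be an A-algebra which is hfp over A with respect to I, and let C be a B-algebra which is hfp over B with respect to the ideal I·B. Then C, viewed as an A-algebra, is hfp over A with respect to I. (Composition of Henselian finitely presented maps is Henselian finitely presented.) -/
universe u

open Polynomial

def HEpi {R R' : Type u} [CommRing R] [CommRing R'] (K : Ideal R) (τ : R →+* R') : Prop :=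
  ∀ (D : Type u) [CommRing D] (J : Ideal D), HenselianRing D J →
    ∀ f g : R' →+* D, f.comp τ = g.comp τ → K.map (f.comp τ) ≤ J → f = g

def NiceSet {R B : Type u} [CommRing R] [CommRing B] (K : Ideal R) (ρ : R →+* B)
    (s : Set B) : Prop :=
  ∃ (R' : Type u) (_ : CommRing R') (τ : R →+* R') (σ : R' →+* B),
    τ.FinitePresentation ∧ σ.comp τ = ρ ∧ HEpi K τ ∧ s ⊆ Set.range σ

lemma isUnit_of_hens {D : Type u} [CommRing D] {J : Ideal D} (h : HenselianRing D J)
    (x c : D) (hx : x * c - 1 ∈ J) : IsUnit x := by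
  have h1 := (Ideal.mem_jacobson_bot.1 (h.jac hx)) 1
  have h2 : IsUnit (x * c) := by simpa using h1
  exact isUnit_of_mul_isUnit_left h2

section
variable {R B : Type u} [CommRing R] [CommRing B] {K : Ideal R} {ρ : R →+* B}

lemma NiceSet.mono {s t : Set B} (h : s ⊆ t) (ht : NiceSet K ρ t) : NiceSet K ρ s := by
  obtain ⟨R', _, τ, σ, h1, h2, h3, h4⟩ := ht
  exact ⟨R', _, τ, σ, h1, h2, h3, h.trans h4⟩

lemma NiceSet.range : NiceSet K ρ (Set.range ρ) :=
  ⟨R, _, RingHom.id R, ρ, RingHom.FinitePresentation.id R, by simp,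
    fun D _ J _ f g h _ => by simpa using h, subset_rfl⟩

lemma NiceSet.union {s t : Set B} (hs : NiceSet K ρ s) (ht : NiceSet K ρ t) :
    NiceSet K ρ (s ∪ t) := by
  obtain ⟨R1, _, τ1, σ1, a1, b1, c1, d1⟩ := hs
  obtain ⟨R2, _, τ2, σ2, a2, b2, c2, d2⟩ := ht
  let := τ1.toAlgebra
  let := τ2.toAlgebra
  let := ρ.toAlgebra
  have : Algebra.FinitePresentation R R1 := a1
  have : Algebra.FinitePresentation R R2 := a2
  let s1 : R1 →ₐ[R] B := { σ1 with commutes' := fun r => RingHom.congr_fun b1 r }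
  let s2 : R2 →ₐ[R] B := { σ2 with commutes' := fun r => RingHom.congr_fun b2 r }
  let p := Algebra.TensorProduct.productMap s1 s2
  have hL : (Algebra.TensorProduct.includeLeft (R := R) (S := R) (A := R1) (B := R2)).toRingHom.comp
      τ1 = algebraMap R (TensorProduct R R1 R2) :=
    (Algebra.TensorProduct.includeLeft (R := R) (S := R) (A := R1) (B := R2)).comp_algebraMap
  have hR : (Algebra.TensorProduct.includeRight (R := R) (A := R1) (B := R2)).toRingHom.comp
      τ2 = algebraMap R (TensorProduct R R1 R2) :=
    (Algebra.TensorProduct.includeRight (R := R) (A := R1) (B := R2)).comp_algebraMap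
  refine ⟨TensorProduct R R1 R2, inferInstance, algebraMap R _, p.toRingHom, ?_, ?_, ?_, ?_⟩
  · rw [RingHom.finitePresentation_algebraMap]
    exact Algebra.FinitePresentation.trans R R1 _
  · exact p.comp_algebraMap
  · intro D _ J hJ f g hfg hK
    refine Algebra.TensorProduct.ringHom_ext ?_ ?_
    · refine c1 D J hJ _ _ ?_ ?_
      · exact (congrArg f.comp hL).trans (hfg.trans (congrArg g.comp hL).symm)
      · exact (congrArg (fun z => K.map (f.comp z)) hL).le.trans hK
    · refine c2 D J hJ _ _ ?_ ?_
      · exact (congrArg f.comp hR).trans (hfg.trans (congrArg g.comp hR).symm)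
      · exact (congrArg (fun z => K.map (f.comp z)) hR).le.trans hK
  · rintro x (hx | hx)
    · obtain ⟨y, rfl⟩ := d1 hx
      exact ⟨y ⊗ₜ 1, by simp [p]; rfl⟩
    · obtain ⟨y, rfl⟩ := d2 hx
      exact ⟨1 ⊗ₜ y, by simp [p]; rfl⟩

lemma NiceSet.of_finite {s : Set B} (hs : s.Finite) (h : ∀ x ∈ s, NiceSet K ρ {x}) :
    NiceSet K ρ s := by
  induction s, hs using Set.Finite.induction_on with
  | empty => exact NiceSet.mono (by simp) NiceSet.range
  | @insert a s _ _ ih =>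
    rw [Set.insert_eq]
    exact (h a (by simp)).union (ih fun x hx => h x (by simp [hx]))

/-- adjoining a root of `1 - f0 X + e G` with `e ∈ K` -/
lemma NiceSet.adjoin {R' : Type u} [CommRing R'] {τ : R →+* R'} {σ : R' →+* B}
    (h1 : τ.FinitePresentation) (h2 : σ.comp τ = ρ) (h3 : HEpi K τ)
    (f0 e : R') (he : e ∈ K.map τ) (G : R'[X]) (v : B)
    (hv : 1 - σ f0 * v + σ e * G.eval₂ σ v = 0) : NiceSet K ρ {v} := by
  let h : R'[X] := 1 - C f0 * X + C e * G
  have hroot : h.eval₂ σ v = 0 := by simpa [h, eval₂_add, eval₂_sub, eval₂_mul] using hv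
  refine ⟨AdjoinRoot h, inferInstance, (AdjoinRoot.of h).comp τ, AdjoinRoot.lift σ v hroot,
    ?_, ?_, ?_, ?_⟩
  · refine RingHom.FinitePresentation.comp ?_ h1
    have : Algebra.FinitePresentation R' (AdjoinRoot h) := inferInstance
    rw [← AdjoinRoot.algebraMap_eq, RingHom.finitePresentation_algebraMap]
    exact this
  · rw [← RingHom.comp_assoc, AdjoinRoot.lift_comp_of, h2]
  · intro D _ J hJ f g hfg hK
    have hof : f.comp (AdjoinRoot.of h) = g.comp (AdjoinRoot.of h) :=
      h3 D J hJ _ _ (by simpa [RingHom.comp_assoc] using hfg)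
        (by simpa [RingHom.comp_assoc] using hK)
    have key : ∀ f : AdjoinRoot h →+* D, 1 - f (AdjoinRoot.of h f0) * f (AdjoinRoot.root h) +
        f (AdjoinRoot.of h e) *
          (G.map (f.comp (AdjoinRoot.of h))).eval (f (AdjoinRoot.root h)) = 0 := by
      intro f
      have := congrArg f (AdjoinRoot.eval₂_root h)
      rw [hom_eval₂, map_zero] at this
      rw [eval_map]
      simpa [h, eval₂_add, eval₂_sub, eval₂_mul] using this
    have hfe : f (AdjoinRoot.of h e) ∈ J := by
      apply hK
      rw [← RingHom.comp_assoc, ← Ideal.map_map]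
      exact Ideal.mem_map_of_mem (f.comp (AdjoinRoot.of h)) he
    have kf := key f
    have kg := key g
    rw [← hof, ← RingHom.comp_apply g, ← RingHom.comp_apply g, ← hof] at kg
    simp only [RingHom.comp_apply] at kg
    obtain ⟨s, hs⟩ := sub_dvd_eval_sub (f (AdjoinRoot.root h)) (g (AdjoinRoot.root h))
      (G.map (f.comp (AdjoinRoot.of h)))
    have hu : IsUnit (f (AdjoinRoot.of h f0) - f (AdjoinRoot.of h e) * s) := by
      refine isUnit_of_hens hJ _ (f (AdjoinRoot.root h)) ?_
      have : (f (AdjoinRoot.of h f0) - f (AdjoinRoot.of h e) * s) * (f (AdjoinRoot.root h)) - 1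
        = f (AdjoinRoot.of h e) *
          ((G.map (f.comp (AdjoinRoot.of h))).eval (f (AdjoinRoot.root h))
            - s * f (AdjoinRoot.root h)) := by linear_combination (-1 : D) * kf
      rw [this]
      exact J.mul_mem_right _ hfe
    have hr : f (AdjoinRoot.root h) = g (AdjoinRoot.root h) := by
      rw [← sub_eq_zero, ← hu.mul_right_eq_zero]
      linear_combination kg - kf + f (AdjoinRoot.of h e) * hs
    refine AdjoinRoot.ringHom_ext hof hr
  · rintro _ rfl
    exact ⟨AdjoinRoot.root h, by simp⟩

variable (K ρ) in
def niceSubring : Subring B where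
  carrier := {b | NiceSet K ρ {b}}
  mul_mem' {a b} ha hb := by
    obtain ⟨R', _, τ, σ, h1, h2, h3, h4⟩ := NiceSet.union ha hb
    obtain ⟨x, rfl⟩ := h4 (Or.inl rfl)
    obtain ⟨y, rfl⟩ := h4 (Or.inr rfl)
    exact ⟨R', _, τ, σ, h1, h2, h3, by rintro _ rfl; exact ⟨x * y, by simp⟩⟩
  add_mem' {a b} ha hb := by
    obtain ⟨R', _, τ, σ, h1, h2, h3, h4⟩ := NiceSet.union ha hb
    obtain ⟨x, rfl⟩ := h4 (Or.inl rfl)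
    obtain ⟨y, rfl⟩ := h4 (Or.inr rfl)
    exact ⟨R', _, τ, σ, h1, h2, h3, by rintro _ rfl; exact ⟨x + y, by simp⟩⟩
  one_mem' := NiceSet.range.mono (by rintro _ rfl; exact ⟨1, by simp⟩)
  zero_mem' := NiceSet.range.mono (by rintro _ rfl; exact ⟨0, by simp⟩)
  neg_mem' {a} ha := by
    obtain ⟨R', _, τ, σ, h1, h2, h3, h4⟩ := ha
    obtain ⟨x, rfl⟩ := h4 rfl
    exact ⟨R', _, τ, σ, h1, h2, h3, by rintro _ rfl; exact ⟨-x, by simp⟩⟩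

lemma mem_niceSubring {b : B} : b ∈ niceSubring K ρ ↔ NiceSet K ρ {b} := Iff.rfl

lemma inv_mem_nice {u v : B} (hu : u ∈ niceSubring K ρ) (huv : u * v = 1) :
    v ∈ niceSubring K ρ := by
  obtain ⟨R', _, τ, σ, h1, h2, h3, h4⟩ := hu
  obtain ⟨x, rfl⟩ := h4 rfl
  exact NiceSet.adjoin h1 h2 h3 x 0 (zero_mem _) 0 v (by simp [huv])

variable (K ρ) in
def toNice : R →+* niceSubring K ρ :=
  ρ.codRestrict _ fun x => NiceSet.range.mono (by rintro _ rfl; exact ⟨x, rfl⟩)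

lemma subtype_comp_toNice : (niceSubring K ρ).subtype.comp (toNice K ρ) = ρ := by
  ext; rfl

lemma map_toNice_le (x : niceSubring K ρ) (hx : x ∈ K.map (toNice K ρ)) :
    (x : B) ∈ K.map ρ := by
  have := Ideal.mem_map_of_mem (niceSubring K ρ).subtype hx
  rwa [Ideal.map_map, subtype_comp_toNice] at this

lemma lift_mem (x : niceSubring K ρ) (hx : x ∈ K.map (toNice K ρ)) :
    ∃ t : Set B, t.Finite ∧ t ⊆ niceSubring K ρ ∧
      ∀ (R' : Type u) [CommRing R'] (τ : R →+* R') (σ : R' →+* B), σ.comp τ = ρ →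
        t ⊆ Set.range σ → ∃ e ∈ K.map τ, σ e = x := by
  refine Submodule.span_induction (p := fun (x : niceSubring K ρ) _ =>
    ∃ t : Set B, t.Finite ∧ t ⊆ niceSubring K ρ ∧
      ∀ (R' : Type u) [CommRing R'] (τ : R →+* R') (σ : R' →+* B), σ.comp τ = ρ →
        t ⊆ Set.range σ → ∃ e ∈ K.map τ, σ e = x) ?_ ?_ ?_ ?_ hx
  · rintro _ ⟨k, hk, rfl⟩
    exact ⟨∅, by simp, by simp, fun R' _ τ σ h _ =>
      ⟨τ k, Ideal.mem_map_of_mem _ hk, RingHom.congr_fun h k⟩⟩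
  · exact ⟨∅, by simp, by simp, fun R' _ τ σ h _ => ⟨0, zero_mem _, by simp⟩⟩
  · rintro x y _ _ ⟨t, t1, t2, t3⟩ ⟨s, s1, s2, s3⟩
    refine ⟨t ∪ s, t1.union s1, Set.union_subset t2 s2, fun R' _ τ σ h hts => ?_⟩
    obtain ⟨e, he, he'⟩ := t3 R' τ σ h (Set.subset_union_left.trans hts)
    obtain ⟨e2, he2, he2'⟩ := s3 R' τ σ h (Set.subset_union_right.trans hts)
    exact ⟨e + e2, add_mem he he2, by simp [he', he2']⟩
  · rintro b x _ ⟨t, t1, t2, t3⟩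
    refine ⟨insert (b : B) t, t1.insert _, Set.insert_subset b.2 t2, fun R' _ τ σ h hts => ?_⟩
    obtain ⟨e, he, he'⟩ := t3 R' τ σ h ((Set.subset_insert _ _).trans hts)
    obtain ⟨c, hc⟩ := hts (Set.mem_insert _ _)
    exact ⟨c * e, Ideal.mul_mem_left _ _ he, by simp [he', hc]⟩

lemma nice_henselian (hB : HenselianRing B (K.map ρ)) :
    HenselianRing (niceSubring K ρ) (K.map (toNice K ρ)) where
  jac := by
    intro x hx
    rw [Ideal.mem_jacobson_bot]
    intro y
    have hx' := map_toNice_le x hx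
    obtain ⟨v, hv⟩ := isUnit_iff_exists_inv.1 ((Ideal.mem_jacobson_bot.1 (hB.jac hx')) y)
    have : ((x * y + 1 : niceSubring K ρ) : B) * v = 1 := by simpa using hv
    have hv' := inv_mem_nice (x * y + 1 : niceSubring K ρ).2 this
    exact isUnit_iff_exists_inv.2 ⟨⟨v, hv'⟩, Subtype.ext this⟩
  is_henselian := by
    intro f hf a₀ h₁ h₂
    let ι := (niceSubring K ρ).subtype
    -- inverse of the derivative
    obtain ⟨c, hc⟩ := isUnit_iff_exists_inv.1 h₂
    obtain ⟨c, rfl⟩ := Ideal.Quotient.mk_surjective c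
    rw [← map_mul, ← map_one (Ideal.Quotient.mk _), Ideal.Quotient.eq] at hc
    have hcB := map_toNice_le _ hc
    have hfB := map_toNice_le _ h₁
    let F := f.map ι
    have hF0 : F.eval (a₀ : B) = ((f.eval a₀ : niceSubring K ρ) : B) := by
      exact eval_map_apply (f := ι) (p := f) a₀
    have hF1 : F.derivative.eval (a₀ : B) = ((f.derivative.eval a₀ : niceSubring K ρ) : B) := by
      simp only [F, derivative_map]
      exact eval_map_apply (f := ι) (p := derivative f) a₀
    obtain ⟨a, ha, haa⟩ := hB.is_henselian F (hf.map _) a₀ (by rwa [hF0])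
      (by
        refine isUnit_iff_exists_inv.2 ⟨Ideal.Quotient.mk _ (c : B), ?_⟩
        rw [← map_mul, ← map_one (Ideal.Quotient.mk _), Ideal.Quotient.eq, hF1]
        exact hcB)
    -- lift everything to a finite level
    obtain ⟨t, t1, t2, t3⟩ := lift_mem _ h₁
    have hnice : NiceSet K ρ ((t ∪ {(a₀ : B)}) ∪ (F.coeffs : Set B)) := by
      refine NiceSet.of_finite ((t1.union (Set.finite_singleton _)).union
        (Finset.finite_toSet _)) ?_
      rintro x ((hx | hx) | hx)
      · exact t2 hx
      · obtain rfl : x = _ := hx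
        exact a₀.2
      · obtain ⟨n, -, rfl⟩ := mem_coeffs_iff.1 (Finset.mem_coe.1 hx)
        rw [coeff_map]
        exact (f.coeff n).2
    obtain ⟨R', _, τ, σ, r1, r2, r3, r4⟩ := hnice
    obtain ⟨e, he, hex⟩ := t3 R' τ σ r2
      ((Set.subset_union_left.trans Set.subset_union_left).trans r4)
    obtain ⟨α, hα⟩ := r4 (Or.inl (Or.inr rfl))
    obtain ⟨φ, hφ⟩ : ∃ φ : R'[X], φ.map σ = F := by
      rw [← mem_lifts, lifts_iff_coeff_lifts]
      intro n
      by_cases hn : F.coeff n = 0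
      · exact ⟨0, by simp [hn]⟩
      · exact r4 (Or.inr (coeff_mem_coeffs hn))
    let q := (taylor α φ).divX.divX
    have hq : taylor α φ = (q * X + C (φ.derivative.eval α)) * X + C (φ.eval α) := by
      have e1 := divX_mul_X_add (taylor α φ)
      have e2 := divX_mul_X_add (taylor α φ).divX
      rw [coeff_divX, zero_add, taylor_coeff_one] at e2
      rw [taylor_coeff_zero] at e1
      rw [← e1, ← e2]
    have hqB : ∀ s : B, F.eval (s + a₀) =
        (q.eval₂ σ s * s + F.derivative.eval (a₀ : B)) * s + F.eval (a₀ : B) := by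
      intro s
      have := congrArg (fun p => p.eval₂ σ s) hq
      simp only [eval₂_add, eval₂_mul, eval₂_X, eval₂_C] at this
      rw [← hα, ← hφ, derivative_map, eval_map_apply, eval_map_apply, ← this, eval_map,
        taylor_apply, eval₂_comp]
      simp
    set s := a - a₀ with hs
    have h0 := hqB s
    rw [show s + a₀ = a by simp [hs], show F.eval a = 0 from ha] at h0
    obtain ⟨v, hv⟩ := isUnit_iff_exists_inv.1
      (isUnit_of_hens hB (q.eval₂ σ s * s + F.derivative.eval (a₀ : B)) c (by
        have : (q.eval₂ σ s * s + F.derivative.eval (a₀ : B)) * c - 1 =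
          (q.eval₂ σ s * c) * s + (F.derivative.eval (a₀ : B) * c - 1) := by ring
        rw [this]
        refine add_mem (Ideal.mul_mem_left _ _ haa) ?_
        rw [hF1]
        exact hcB))
    have hsv : s = - F.eval (a₀ : B) * v := by
      linear_combination (-v) * h0 - s * hv
    have hvn : v ∈ niceSubring K ρ := by
      refine NiceSet.adjoin r1 r2 r3 (φ.derivative.eval α) e he
        (X ^ 2 * q.comp (- C e * X)) v ?_
      have h5 : σ (φ.derivative.eval α) = F.derivative.eval (a₀ : B) := by
        rw [← hα, ← hφ, derivative_map, eval_map_apply]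
      have h6 : (q.comp (- C e * X)).eval₂ σ v = q.eval₂ σ s := by
        rw [eval₂_comp]
        congr 1
        simp [hsv, hex, hF0]
      rw [eval₂_mul, h6, h5, hex, ← hF0]
      simp only [eval₂_pow, eval₂_X]
      linear_combination (-1 : B) * hv + v * q.eval₂ σ s * hsv
    refine ⟨a₀ - f.eval a₀ * ⟨v, hvn⟩, ?_, ?_⟩
    · rw [IsRoot.def]
      apply Subtype.ext
      have h7 : ((f.eval (a₀ - f.eval a₀ * ⟨v, hvn⟩) : niceSubring K ρ) : B) =
          F.eval ((a₀ - f.eval a₀ * ⟨v, hvn⟩ : niceSubring K ρ) : B) :=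
        (eval_map_apply (f := ι) (p := f) _).symm
      rw [h7]
      have : ((a₀ - f.eval a₀ * ⟨v, hvn⟩ : niceSubring K ρ) : B) = a := by
        rw [AddSubgroupClass.coe_sub, Subring.coe_mul, ← hF0]
        linear_combination hs - hsv
      rw [this]
      exact ha
    · rw [sub_sub_cancel_left]
      exact neg_mem (Ideal.mul_mem_right _ _ h₁)

lemma all_nice (h : IsHenselization K ρ) (b : B) : NiceSet K ρ {b} := by
  have hN := nice_henselian h.1
  obtain ⟨g, hg, -⟩ := h.2 _ _ hN (toNice K ρ) le_rfl
  have h1 : (niceSubring K ρ).subtype.comp g = RingHom.id B :=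
    (h.2 B _ h.1 ρ le_rfl).unique (by
      show ((niceSubring K ρ).subtype.comp g).comp ρ = ρ
      rw [RingHom.comp_assoc, hg, subtype_comp_toNice]) (by simp)
  have h2 : ((g b : niceSubring K ρ) : B) = b := RingHom.congr_fun h1 b
  have := (g b).2
  rwa [h2] at this

end

/-- Composition of Henselian finitely presented maps is Henselian finitely presented. -/
theorem isHfp_comp {A B C : Type u} [CommRing A] [CommRing B] [CommRing C]
    [Algebra A B] [Algebra B C] [Algebra A C] [IsScalarTower A B C]
    (I : Ideal A) [HenselianRing A I]
    (hB : IsHfp (algebraMap A B) I)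
    (hC : IsHfp (algebraMap B C) (I.map (algebraMap A B))) :
    IsHfp (algebraMap A C) I := by
  obtain ⟨R, _, ψ, ρ, h1, h2, h3⟩ := hB
  obtain ⟨S, _, ψS, ρS, s1, s2, s3⟩ := hC
  let _ : Algebra B S := ψS.toAlgebra
  have : Algebra.FinitePresentation B S := s1
  let P := Algebra.Presentation.ofFinitePresentation B S
  obtain ⟨R', _, τ, σ, r1, r2, r3, r4⟩ :=
    NiceSet.of_finite (P.finite_coeffs) (fun x _ => all_nice h3 x)
  let _ : Algebra R' B := σ.toAlgebra
  let _ : Algebra R' S := (ψS.comp σ).toAlgebra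
  have : IsScalarTower R' B S := IsScalarTower.of_algebraMap_eq fun _ => rfl
  have : P.HasCoeffs R' := ⟨r4⟩
  let M := P.ModelOfHasCoeffs R'
  let E : TensorProduct R' B M ≃ₐ[B] S := P.tensorModelOfHasCoeffsEquiv R'
  let inr : M →+* TensorProduct R' B M :=
    (Algebra.TensorProduct.includeRight (R := R') (A := B) (B := M)).toRingHom
  let inl : B →+* TensorProduct R' B M := Algebra.TensorProduct.includeLeftRingHom
  have hinr : inr.comp (algebraMap R' M) = inl.comp σ := by
    ext x
    exact ((Algebra.TensorProduct.includeRight (R := R') (A := B) (B := M)).commutes x)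
  let Er : TensorProduct R' B M →+* S := E.toRingEquiv.toRingHom
  let Es : S →+* TensorProduct R' B M := E.symm.toRingEquiv.toRingHom
  have hEl : Er.comp inl = ψS := by
    ext x
    exact E.commutes x
  have hEsr : Es.comp Er = RingHom.id _ := by
    ext x
    exact E.symm_apply_apply x
  have hErs : Er.comp Es = RingHom.id _ := by
    ext x
    exact E.apply_symm_apply x
  have hEsl : Es.comp ψS = inl := by
    rw [← hEl, ← RingHom.comp_assoc, hEsr, RingHom.id_comp]
  let ν : A →+* M := (algebraMap R' M).comp (τ.comp ψ)
  let μ : M →+* C := ρS.comp (Er.comp inr)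
  have hμR' : μ.comp (algebraMap R' M) = (algebraMap B C).comp σ := by
    rw [← s2]
    simp only [μ, RingHom.comp_assoc]
    rw [hinr, ← RingHom.comp_assoc _ _ Er, hEl]
  have hμν : μ.comp ν = algebraMap A C := by
    rw [IsScalarTower.algebraMap_eq A B C]
    simp only [ν]
    rw [← RingHom.comp_assoc, hμR', ← h2, ← r2]
    rfl
  have hIC : ((I.map (algebraMap A B)).map ψS).map ρS = I.map (algebraMap A C) := by
    rw [Ideal.map_map, Ideal.map_map, s2, ← IsScalarTower.algebraMap_eq]
  refine ⟨M, inferInstance, ν, μ, ?_, hμν, ?_, ?_⟩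
  · refine RingHom.FinitePresentation.comp ?_ (RingHom.FinitePresentation.comp r1 h1)
    rw [RingHom.finitePresentation_algebraMap]
    infer_instance
  · rw [Ideal.map_map, hμν, ← hIC]
    exact s3.1
  · intro D _ J hJ f hfJ
    rw [Ideal.map_map] at hfJ
    let fR := (f.comp (algebraMap R' M)).comp τ
    have hfR : (I.map ψ).map fR ≤ J := by
      rw [Ideal.map_map]
      exact hfJ
    obtain ⟨g, hg, hgu⟩ := h3.2 D J hJ fR hfR
    have hgσ : g.comp σ = f.comp (algebraMap R' M) := by
      refine r3 D J hJ _ _ ?_ ?_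
      · rw [RingHom.comp_assoc, r2, hg]
      · rw [RingHom.comp_assoc, r2, hg]
        exact hfR
    let _ : Algebra R' D := (f.comp (algebraMap R' M)).toAlgebra
    let ga : B →ₐ[R'] D := { g with commutes' := fun r => RingHom.congr_fun hgσ r }
    let fa : M →ₐ[R'] D := { f with commutes' := fun r => rfl }
    let l : TensorProduct R' B M →+* D := (Algebra.TensorProduct.productMap ga fa).toRingHom
    have hll : l.comp inl = g := by
      ext x
      exact Algebra.TensorProduct.productMap_left_apply ga fa x
    have hlr : l.comp inr = f := by
      refine RingHom.ext fun x => ?_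
      exact Algebra.TensorProduct.productMap_right_apply ga fa x
    have hgA : (I.map (algebraMap A B)).map g ≤ J := by
      rw [← h2, ← Ideal.map_map, Ideal.map_map, hg]
      exact hfR
    have hsψ : (l.comp Es).comp ψS = g := by
      rw [RingHom.comp_assoc, hEsl, hll]
    have hJ2 : ((I.map (algebraMap A B)).map ψS).map (l.comp Es) ≤ J := by
      rw [Ideal.map_map, hsψ]
      exact hgA
    obtain ⟨w, hw, hwu⟩ := s3.2 D J hJ (l.comp Es) hJ2
    refine ⟨w, ?_, ?_⟩
    · show w.comp μ = f
      simp only [μ]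
      rw [← RingHom.comp_assoc, hw, RingHom.comp_assoc, ← RingHom.comp_assoc _ _ Es, hEsr,
        RingHom.id_comp, hlr]
    · intro w' hw'
      refine hwu w' ?_
      have hB' : w'.comp (algebraMap B C) = g := by
        refine hgu _ ?_
        show (w'.comp (algebraMap B C)).comp ρ = fR
        rw [← r2, ← RingHom.comp_assoc, RingHom.comp_assoc _ _ w', ← hμR', ← RingHom.comp_assoc _ _ w', hw']
      have key : (w'.comp ρS).comp Er = l := by
        refine Algebra.TensorProduct.ringHom_ext ?_ ?_
        · have : ((w'.comp ρS).comp Er).comp inl = l.comp inl := by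
            rw [RingHom.comp_assoc, hEl, RingHom.comp_assoc, s2, hB', hll]
          exact this
        · have : ((w'.comp ρS).comp Er).comp inr = l.comp inr := by
            rw [hlr, ← hw']
            rfl
          exact this
      show w'.comp ρS = l.comp Es
      rw [← key, RingHom.comp_assoc, hErs, RingHom.comp_id]
end

section
/- Functorial criterion for hfp maps (Grothendieck-style): let (A, I) be a Henselian pair and B an A-algebra such that (B, I·B) is a Henselian pair. Then the following are equivalent: (i) B is hfp over A with respect to I; (ii) for every nonempty directed preorder ι and every directed system (R_i)_{i ∈ ι} of A-algebras with A-algebra transition maps such that each pair (R_i, I·R_i) is Henselian, with R_∞ the direct limit of the system: (a) every A-algebra homomorphism B → R_∞ factors as the canonical map R_i → R_∞ composed with an A-algebra homomorphism B → R_i for some i, and (b) whenever g : B → R_i and h : B → R_j are A-algebra homomorphisms whose composites with the canonical maps to R_∞ agree, there exists k with i ≤ k and j ≤ k such that the composites of g and h with the transition maps to R_k agree. (Equivalently, the canonical map colim_i Hom_{A-alg}(B, R_i) → Hom_{A-alg}(B, R_∞) is bijective.) -/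
universe u

namespace HfpAux

open Polynomial

structure HU {R : Type u} [CommRing R] (K : Ideal R) : Type (u + 1) where
  C : Type u
  [ring : CommRing C]
  J : Ideal C
  hens : HenselianRing C J
  f : R →+* C
  hf : K.map f ≤ J

attribute [instance] HU.ring

structure IsW {R : Type u} [CommRing R] (K : Ideal R) {S : Type u} [CommRing S]
    (α : R →+* S) : Prop where
  fp : α.FinitePresentation
  ext : ∀ X : HU K, ∃! g : S →+* X.C, g.comp α = X.f

theorem IsW.id {R : Type u} [CommRing R] (K : Ideal R) : IsW K (RingHom.id R) where
  fp := RingHom.FinitePresentation.id R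
  ext X := ⟨X.f, by simp, fun g hg => by simpa using hg⟩

/-- extension of an `IsW` algebra by a uniquely solvable f.p. algebra -/
theorem IsW.step {R : Type u} [CommRing R] {K : Ideal R} {S : Type u} [CommRing S]
    {α : R →+* S} (h : IsW K α) {T : Type u} [CommRing T] (β : S →+* T)
    (hβ : β.FinitePresentation)
    (hT : ∀ (X : HU K) (g : S →+* X.C), g.comp α = X.f → ∃! k : T →+* X.C, k.comp β = g) :
    IsW K (β.comp α) where
  fp := hβ.comp h.fp
  ext X := by
    obtain ⟨g, hg, hgu⟩ := h.ext X
    obtain ⟨k, hk, hku⟩ := hT X g hg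
    refine ⟨k, ?_, ?_⟩
    · change k.comp (β.comp α) = X.f
      rw [← RingHom.comp_assoc, hk, hg]
    · intro k' hk'
      apply hku
      exact hgu _ (by change (k'.comp β).comp α = X.f; rw [RingHom.comp_assoc]; exact hk')

theorem IsW.tensor {R : Type u} [CommRing R] {K : Ideal R} {S : Type u} [CommRing S]
    {α : R →+* S} (h : IsW K α) {T : Type u} [CommRing T] {β : R →+* T} (h' : IsW K β) :
    ∃ (U : Type u) (_ : CommRing U) (γ : R →+* U) (i : S →+* U) (j : T →+* U),
      IsW K γ ∧ i.comp α = γ ∧ j.comp β = γ := by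
  let := α.toAlgebra
  let := β.toAlgebra
  refine ⟨TensorProduct R S T, inferInstance, algebraMap R _,
    (Algebra.TensorProduct.includeLeft : S →ₐ[R] _).toRingHom,
    (Algebra.TensorProduct.includeRight : T →ₐ[R] _).toRingHom, ⟨?_, ?_⟩, ?_, ?_⟩
  · have : Algebra.FinitePresentation R S := h.fp
    have : Algebra.FinitePresentation R T := h'.fp
    rw [RingHom.finitePresentation_algebraMap]
    exact Algebra.FinitePresentation.trans R S (TensorProduct R S T)
  · intro X
    let := X.f.toAlgebra
    obtain ⟨g, hg, hgu⟩ := h.ext X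
    obtain ⟨k, hk, hku⟩ := h'.ext X
    let ga : S →ₐ[R] X.C := ⟨g, fun r => RingHom.congr_fun hg r⟩
    let ka : T →ₐ[R] X.C := ⟨k, fun r => RingHom.congr_fun hk r⟩
    refine ⟨(Algebra.TensorProduct.productMap ga ka).toRingHom, ?_, ?_⟩
    · ext r
      exact (Algebra.TensorProduct.productMap ga ka).commutes r
    · intro m hm
      let ma : TensorProduct R S T →ₐ[R] X.C := ⟨m, fun r => RingHom.congr_fun hm r⟩
      have : ma = Algebra.TensorProduct.productMap ga ka := by
        apply Algebra.TensorProduct.ext'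
        intro a b
        have h1 : m.comp (Algebra.TensorProduct.includeLeft : S →ₐ[R] TensorProduct R S T).toRingHom = g := by
          apply hgu
          ext r
          exact (ma.comp (Algebra.TensorProduct.includeLeft : S →ₐ[R] TensorProduct R S T)).commutes r
        have h2 : m.comp (Algebra.TensorProduct.includeRight : T →ₐ[R] TensorProduct R S T).toRingHom = k := by
          apply hku
          ext r
          exact (ma.comp (Algebra.TensorProduct.includeRight : T →ₐ[R] TensorProduct R S T)).commutes r
        have e1 : ma (a ⊗ₜ 1) = g a := RingHom.congr_fun h1 a
        have e2 : ma (1 ⊗ₜ b) = k b := RingHom.congr_fun h2 b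
        have : (a ⊗ₜ[R] b) = (a ⊗ₜ[R] (1 : T)) * ((1 : S) ⊗ₜ[R] b) := by simp
        rw [this, map_mul, map_mul, e1, e2]
        simp [ga, ka]
      exact congrArg AlgHom.toRingHom this
  · ext r; exact (Algebra.TensorProduct.includeLeft : S →ₐ[R] TensorProduct R S T).commutes r
  · ext r; exact (Algebra.TensorProduct.includeRight : T →ₐ[R] TensorProduct R S T).commutes r

noncomputable def IsW.e {R : Type u} [CommRing R] {K : Ideal R} {S : Type u} [CommRing S]
    {α : R →+* S} (h : IsW K α) (X : HU K) : S →+* X.C := (h.ext X).choose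

theorem IsW.e_comp {R : Type u} [CommRing R] {K : Ideal R} {S : Type u} [CommRing S]
    {α : R →+* S} (h : IsW K α) (X : HU K) : (h.e X).comp α = X.f := (h.ext X).choose_spec.1

theorem IsW.e_uniq {R : Type u} [CommRing R] {K : Ideal R} {S : Type u} [CommRing S]
    {α : R →+* S} (h : IsW K α) (X : HU K) (g : S →+* X.C) (hg : g.comp α = X.f) :
    g = h.e X := (h.ext X).choose_spec.2 g hg

noncomputable def IsW.pi {R : Type u} [CommRing R] {K : Ideal R} {S : Type u} [CommRing S]
    {α : R →+* S} (h : IsW K α) : S →+* ∀ X : HU K, X.C := RingHom.pi fun X => h.e X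

theorem IsW.pi_comp {R : Type u} [CommRing R] {K : Ideal R} {S : Type u} [CommRing S]
    {α : R →+* S} (h : IsW K α) {T : Type u} [CommRing T] {β : R →+* T} (h' : IsW K β)
    (i : S →+* T) (hi : i.comp α = β) (s : S) : h'.pi (i s) = h.pi s := by
  funext X
  exact RingHom.congr_fun (h.e_uniq X ((h'.e X).comp i)
    (by rw [RingHom.comp_assoc, hi, h'.e_comp])) s

def IsDef {R : Type u} [CommRing R] (K : Ideal R) (x : ∀ X : HU K, X.C) : Prop :=
  ∃ (S : Type u) (_ : CommRing S) (α : R →+* S) (h : IsW K α), x ∈ Set.range h.pi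

theorem IsDef.two {R : Type u} [CommRing R] {K : Ideal R} {x y : ∀ X : HU K, X.C}
    (hx : IsDef K x) (hy : IsDef K y) :
    ∃ (S : Type u) (_ : CommRing S) (α : R →+* S) (h : IsW K α) (s t : S),
      h.pi s = x ∧ h.pi t = y := by
  obtain ⟨S, _, α, h, s, rfl⟩ := hx
  obtain ⟨T, _, β, h', t, rfl⟩ := hy
  obtain ⟨U, _, γ, i, j, h'', hi, hj⟩ := h.tensor h'
  exact ⟨U, _, γ, h'', i s, j t, h.pi_comp h'' i hi s, h'.pi_comp h'' j hj t⟩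

def Hsub {R : Type u} [CommRing R] (K : Ideal R) : Subring (∀ X : HU K, X.C) where
  carrier := {x | IsDef K x}
  mul_mem' hx hy := by
    obtain ⟨S, _, α, h, s, t, rfl, rfl⟩ := IsDef.two hx hy
    exact ⟨S, _, α, h, s * t, map_mul _ _ _⟩
  add_mem' hx hy := by
    obtain ⟨S, _, α, h, s, t, rfl, rfl⟩ := IsDef.two hx hy
    exact ⟨S, _, α, h, s + t, map_add _ _ _⟩
  one_mem' := ⟨R, _, _, IsW.id K, 1, map_one _⟩
  zero_mem' := ⟨R, _, _, IsW.id K, 0, map_zero _⟩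
  neg_mem' hx := by
    obtain ⟨S, _, α, h, s, rfl⟩ := hx
    exact ⟨S, _, α, h, -s, map_neg _ _⟩

theorem isDef_small {R : Type u} [CommRing R] (K : Ideal R) (x : ∀ X : HU K, X.C)
    (hx : IsDef K x) :
    ∃ d : (Σ n : ℕ, Ideal (MvPolynomial (Fin n) R) × MvPolynomial (Fin n) R),
      ∀ X : HU K, ∃ φ : MvPolynomial (Fin d.1) R →+* X.C,
        (φ.comp MvPolynomial.C = X.f ∧ ∀ p ∈ d.2.1, φ p = 0) ∧ φ d.2.2 = x X ∧
        ∀ ψ : MvPolynomial (Fin d.1) R →+* X.C,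
          ψ.comp MvPolynomial.C = X.f → (∀ p ∈ d.2.1, ψ p = 0) → ψ = φ := by
  obtain ⟨S, _, α, h, s, rfl⟩ := hx
  let := α.toAlgebra
  obtain ⟨n, f, hf, -⟩ : Algebra.FinitePresentation R S := h.fp
  obtain ⟨p, rfl⟩ := hf s
  refine ⟨⟨n, RingHom.ker f.toRingHom, p⟩, fun X => ⟨(h.e X).comp f.toRingHom, ⟨?_, ?_⟩, rfl, ?_⟩⟩
  · rw [← h.e_comp X, RingHom.comp_assoc]
    congr 1
    ext r
    exact f.commutes r
  · intro p hp
    have : f p = 0 := hp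
    simp [this]
  · intro ψ h1 h2
    have hk : RingHom.ker f.toRingHom ≤ RingHom.ker ψ := h2
    have hf' : Function.Surjective f.toRingHom := hf
    let l := RingHom.liftOfSurjective f.toRingHom hf' ⟨ψ, hk⟩
    have hl : l.comp f.toRingHom = ψ := RingHom.liftOfRightInverse_comp _ _ _ _
    rw [← hl]
    congr 1
    apply h.e_uniq
    rw [← h1, ← hl, RingHom.comp_assoc]
    congr 1
    ext r
    exact (f.commutes r).symm

instance {R : Type u} [CommRing R] (K : Ideal R) : Small.{u} (Hsub K) := by
  choose d hd using isDef_small K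
  refine small_of_injective (β := (Σ n : ℕ, Ideal (MvPolynomial (Fin n) R) × MvPolynomial (Fin n) R))
    (f := fun x : Hsub K => d x.1 x.2) ?_
  intro x y hxy
  ext X
  have h1 := hd x.1 x.2 X
  have h2 := hd y.1 y.2 X
  have hxy : d x.1 x.2 = d y.1 y.2 := hxy
  rw [← hxy] at h2
  obtain ⟨φ, ⟨a, b⟩, c, -⟩ := h1
  obtain ⟨φ', -, c', u⟩ := h2
  rw [← c, ← c', u φ a b]

/-- interface for the henselization -/
theorem exists_H {R : Type u} [CommRing R] (K : Ideal R) :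
    ∃ (H : Type u) (_ : CommRing H) (ev : ∀ X : HU K, H →+* X.C),
      (∀ a b : H, (∀ X, ev X a = ev X b) → a = b) ∧
      (∀ {S : Type u} [CommRing S] {α : R →+* S} (h : IsW K α),
        ∃ σ : S →+* H, ∀ X, (ev X).comp σ = h.e X) ∧
      (∀ t : Finset H, ∃ (S : Type u) (_ : CommRing S) (α : R →+* S) (_ : IsW K α)
        (σ : S →+* H), (∀ X, ((ev X).comp σ).comp α = X.f) ∧ ∀ x ∈ t, x ∈ Set.range σ) := by
  let q := Shrink.ringEquiv.{u} (Hsub K)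
  let ev : ∀ X : HU K, Shrink.{u} (Hsub K) →+* X.C := fun X =>
    (Pi.evalRingHom _ X).comp ((Hsub K).subtype.comp q.toRingHom)
  have hev : ∀ X x, ev X x = (q x).1 X := fun _ _ => rfl
  have hinj : ∀ a b : Shrink.{u} (Hsub K), (∀ X, ev X a = ev X b) → a = b := by
    intro a b hab
    apply q.injective
    ext X
    exact hab X
  have hσ : ∀ {S : Type u} [CommRing S] {α : R →+* S} (h : IsW K α),
        ∃ σ : S →+* Shrink.{u} (Hsub K), ∀ X, (ev X).comp σ = h.e X := by
    intro S _ α h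
    refine ⟨q.symm.toRingHom.comp (h.pi.codRestrict (Hsub K) (fun s => ⟨S, _, α, h, s, rfl⟩)), ?_⟩
    intro X
    ext s
    simp only [RingHom.comp_apply, hev]
    simp only [IsW.pi]; simp
  refine ⟨Shrink.{u} (Hsub K), inferInstance, ev, hinj, hσ, ?_⟩
  classical
  intro t
  induction t using Finset.induction_on with
  | empty =>
    obtain ⟨σ, h⟩ := hσ (IsW.id K)
    exact ⟨R, _, _, IsW.id K, σ, fun X => by rw [h, IsW.e_comp], by simp⟩
  | insert a t _ ih =>
    obtain ⟨S, _, α, h, σ, h1, h2⟩ := ih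
    obtain ⟨T, _, β, h', b, hb⟩ := (q a).2
    obtain ⟨U, _, γ, i, j, h'', hi, hj⟩ := h.tensor h'
    obtain ⟨τ, hτ⟩ := hσ h''
    refine ⟨U, _, γ, h'', τ, fun X => by rw [hτ, IsW.e_comp], ?_⟩
    intro x hx
    rw [Finset.mem_insert] at hx
    rcases hx with rfl | hx
    · refine ⟨j b, ?_⟩
      apply hinj
      intro X
      have := RingHom.congr_fun (hτ X) (j b)
      rw [RingHom.comp_apply] at this
      rw [this, hev, ← hb, ← h'.pi_comp h'' j hj]
      rfl
    · obtain ⟨s, rfl⟩ := h2 x hx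
      refine ⟨i s, ?_⟩
      apply hinj
      intro X
      have e1 := RingHom.congr_fun (hτ X) (i s)
      rw [RingHom.comp_apply] at e1
      have e2 := RingHom.congr_fun (h.e_uniq X _ (h1 X)) s
      rw [RingHom.comp_apply] at e2
      rw [e1, e2]
      exact congrFun (h.pi_comp h'' i hi s) X


theorem isUnit_of_sub_mem {C : Type u} [CommRing C] {J : Ideal C} (hJ : J ≤ Ideal.jacobson ⊥)
    {a b : C} (ha : IsUnit a) (hab : b - a ∈ J) : IsUnit b := by
  have := isLocalHom_of_le_jacobson_bot J hJ
  apply isUnit_of_map_unit (Ideal.Quotient.mk J)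
  rw [Ideal.Quotient.eq.2 hab]
  exact ha.map _

theorem root_exists_unique {C : Type u} [CommRing C] {J : Ideal C} (hC : HenselianRing C J)
    (f q : C[X]) (hf : f.Monic) (a₀ : C) (h0 : f.eval a₀ ∈ J)
    (h1 : IsUnit (f.derivative.eval a₀)) (hq : f = (X - Polynomial.C a₀) * q + Polynomial.C (f.eval a₀)) :
    ∃ a, (f.eval a = 0 ∧ IsUnit (q.eval a)) ∧
      ∀ b, f.eval b = 0 → IsUnit (q.eval b) → b = a := by
  have hev : ∀ b, f.eval b = (b - a₀) * q.eval b + f.eval a₀ := fun b => by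
    have := congrArg (Polynomial.eval b) hq
    simpa using this
  have hd : f.derivative.eval a₀ = q.eval a₀ := by
    have := congrArg (fun p => (Polynomial.derivative p).eval a₀) hq
    simpa using this
  obtain ⟨a, ha, haJ⟩ := hC.is_henselian f hf a₀ h0 (h1.map _)
  have hqa : ∀ b, b - a₀ ∈ J → IsUnit (q.eval b) := by
    intro b hb
    apply isUnit_of_sub_mem hC.jac (hd ▸ h1)
    exact J.mem_of_dvd (Polynomial.sub_dvd_eval_sub b a₀ q) hb
  refine ⟨a, ⟨ha, hqa a haJ⟩, ?_⟩
  intro b hb hub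
  have hbJ : b - a₀ ∈ J := by
    have h2 := hev b
    rw [hb] at h2
    have h3 : (b - a₀) * q.eval b ∈ J := by
      have : (b - a₀) * q.eval b = - f.eval a₀ := by linear_combination -h2
      rw [this]; exact J.neg_mem h0
    exact (Ideal.mul_unit_mem_iff_mem J hub).1 h3
  obtain ⟨k, hk⟩ := Polynomial.binomExpansion f a (b - a)
  have hfa : f.eval a = 0 := ha
  have hba : b - a ∈ J := by
    have := J.sub_mem hbJ haJ
    simpa using this
  rw [add_sub_cancel, hb, hfa] at hk
  have hu : IsUnit (f.derivative.eval a + k * (b - a)) := by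
    apply isUnit_of_sub_mem hC.jac h1
    have h4 : f.derivative.eval a - f.derivative.eval a₀ ∈ J :=
      J.mem_of_dvd (Polynomial.sub_dvd_eval_sub a a₀ _) haJ
    have h5 := J.add_mem h4 (J.mul_mem_left k hba)
    convert h5 using 1
    ring
  have h6 : (f.derivative.eval a + k * (b - a)) * (b - a) = 0 := by linear_combination -hk
  exact sub_eq_zero.1 ((hu.mul_right_eq_zero).1 h6)

theorem fp_adjoin {S : Type u} [CommRing S] (f : S[X]) (z : AdjoinRoot f) :
    (algebraMap S (Localization.Away z)).FinitePresentation := by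
  rw [RingHom.finitePresentation_algebraMap]
  have : Algebra.FinitePresentation S (AdjoinRoot f) :=
    Algebra.FinitePresentation.quotient (Submodule.fg_span_singleton f)
  have : Algebra.FinitePresentation (AdjoinRoot f) (Localization.Away z) :=
    IsLocalization.Away.finitePresentation z
  exact Algebra.FinitePresentation.trans S (AdjoinRoot f) _

theorem exists_hens {R : Type u} [CommRing R] (K : Ideal R) :
    ∃ (H : Type u) (_ : CommRing H) (ρ : R →+* H), IsHenselization K ρ ∧
      ∀ t : Finset H, ∃ (S : Type u) (_ : CommRing S) (α : R →+* S) (_ : IsW K α)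
        (σ : S →+* H), σ.comp α = ρ ∧ ∀ x ∈ t, x ∈ Set.range σ := by
  obtain ⟨H, _, ev, hinj, hσ, hgen⟩ := exists_H K
  obtain ⟨ρ, hρ'⟩ := hσ (IsW.id K)
  have hρ : ∀ X, (ev X).comp ρ = X.f := by
    intro X
    rw [hρ' X]
    simpa using (IsW.id K).e_comp X
  have hring : ∀ {S : Type u} [CommRing S] (φ ψ : S →+* H),
      (∀ X, (ev X).comp φ = (ev X).comp ψ) → φ = ψ := by
    intro S _ φ ψ h
    ext s
    exact hinj _ _ fun X => RingHom.congr_fun (h X) s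
  have hgen' : ∀ t : Finset H, ∃ (S : Type u) (_ : CommRing S) (α : R →+* S) (_ : IsW K α)
        (σ : S →+* H), σ.comp α = ρ ∧ ∀ x ∈ t, x ∈ Set.range σ := by
    intro t
    obtain ⟨S, _, α, h, σ, h1, h2⟩ := hgen t
    refine ⟨S, _, α, h, σ, hring _ _ fun X => ?_, h2⟩
    rw [hρ, ← RingHom.comp_assoc, h1]
  -- extension of maps to `H` along steps
  have hstep : ∀ {S T : Type u} [CommRing S] [CommRing T] {α : R →+* S} (h : IsW K α)
      (σ : S →+* H) (_ : σ.comp α = ρ) (β : S →+* T) (_ : β.FinitePresentation)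
      (_ : ∀ X : HU K, ∃! k : T →+* X.C, k.comp β = (ev X).comp σ),
      ∃ τ : T →+* H, τ.comp β = σ := by
    intro S T _ _ α h σ hσα β hβ hk
    have hW : IsW K (β.comp α) := h.step β hβ (by
      intro X g hg
      have : g = (ev X).comp σ := by
        rw [h.e_uniq X g hg]
        exact (h.e_uniq X _ (by rw [RingHom.comp_assoc, hσα, hρ])).symm
      rw [this]; exact hk X)
    obtain ⟨τ, hτ⟩ := hσ hW
    refine ⟨τ, hring _ _ fun X => ?_⟩
    rw [h.e_uniq X ((ev X).comp σ) (by rw [RingHom.comp_assoc, hσα, hρ])]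
    apply h.e_uniq X
    rw [← RingHom.comp_assoc, hτ, RingHom.comp_assoc, hW.e_comp]
  have hmem : ∀ X : HU K, ∀ x ∈ K.map ρ, ev X x ∈ X.J := by
    intro X x hx
    apply X.hf
    rw [← hρ X, ← Ideal.map_map]
    exact Ideal.mem_map_of_mem _ hx
  have hunit : ∀ z : H, (∀ X, IsUnit (ev X z)) → IsUnit z := by
    intro z hz
    obtain ⟨S, _, α, h, σ, hσα, hr⟩ := hgen' {z}
    obtain ⟨s, rfl⟩ := hr z (by simp)
    have hfp : Algebra.FinitePresentation S (Localization.Away s) :=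
      IsLocalization.Away.finitePresentation s
    obtain ⟨τ, hτ⟩ := hstep h σ hσα (algebraMap S (Localization.Away s))
      (RingHom.finitePresentation_algebraMap.2 hfp) (by
        intro X
        have hu : IsUnit (((ev X).comp σ) s) := hz X
        refine ⟨IsLocalization.Away.lift s hu, IsLocalization.Away.lift_comp s hu, ?_⟩
        intro k hk
        apply IsLocalization.ringHom_ext (Submonoid.powers s)
        rw [hk, IsLocalization.Away.lift_comp])
    rw [← hτ]
    exact (IsLocalization.Away.algebraMap_isUnit s).map τ
  have hjac : K.map ρ ≤ Ideal.jacobson ⊥ := by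
    intro x hx
    rw [Ideal.mem_jacobson_bot]
    intro y
    apply hunit
    intro X
    have := X.hens.jac (hmem X x hx)
    rw [Ideal.mem_jacobson_bot] at this
    simpa using this (ev X y)
  have hhens : HenselianRing H (K.map ρ) := by
    refine ⟨hjac, ?_⟩
    intro f hf a₀ h0 h1
    have := isLocalHom_of_le_jacobson_bot _ hjac
    replace h1 : IsUnit (f.derivative.eval a₀) := isUnit_of_map_unit _ _ h1
    classical
    obtain ⟨S, _, α, h, σ, hσα, hr⟩ := hgen' (insert a₀ f.coeffs)
    obtain ⟨s₀, rfl⟩ := hr a₀ (by simp)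
    have hl : f ∈ Polynomial.lifts σ := by
      rw [Polynomial.lifts_iff_coeff_lifts]
      intro n
      by_cases hn : f.coeff n = 0
      · rw [hn]; exact ⟨0, map_zero _⟩
      · exact hr _ (by
          rw [Finset.mem_insert]; right
          exact Polynomial.coeff_mem_coeffs hn)
    obtain ⟨F, rfl⟩ := (Polynomial.mem_lifts _).1 hl
    let Q := F /ₘ (X - C s₀)
    have hQ : F = (X - C s₀) * Q + C (F.eval s₀) := by
      have := Polynomial.X_sub_C_mul_divByMonic_eq_sub_modByMonic F s₀
      rw [Polynomial.modByMonic_X_sub_C_eq_C_eval] at this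
      rw [this]; ring
    let z : AdjoinRoot F := Polynomial.aeval (AdjoinRoot.root F) Q
    have hcompr : ∀ {D : Type u} [CommRing D] (k : Localization.Away z →+* D) (P : S[X]),
        k (algebraMap (AdjoinRoot F) _ (Polynomial.aeval (AdjoinRoot.root F) P)) =
        (P.map (k.comp (algebraMap S _))).eval (k (algebraMap (AdjoinRoot F) _ (AdjoinRoot.root F))) := by
      intro D _ k P
      rw [Polynomial.eval_map, Polynomial.aeval_def, Polynomial.hom_eval₂, Polynomial.hom_eval₂]
      congr 1
    have hz : ∀ {D : Type u} [CommRing D] (k : Localization.Away z →+* D),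
        IsUnit ((Q.map (k.comp (algebraMap S _))).eval (k (algebraMap (AdjoinRoot F) _ (AdjoinRoot.root F)))) := by
      intro D _ k
      rw [← hcompr]
      exact (IsLocalization.Away.algebraMap_isUnit z).map k
    have hroot : ∀ {D : Type u} [CommRing D] (k : Localization.Away z →+* D),
        (F.map (k.comp (algebraMap S _))).eval (k (algebraMap (AdjoinRoot F) _ (AdjoinRoot.root F))) = 0 := by
      intro D _ k
      rw [← hcompr]
      simp
    obtain ⟨τ, hτ⟩ := hstep h σ hσα (algebraMap S (Localization.Away z)) (fp_adjoin F z) (by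
      intro X
      set g := (ev X).comp σ with hg
      obtain ⟨a, ⟨ha1, ha2⟩, ha3⟩ := root_exists_unique X.hens (F.map g) (Q.map g)
        (by rw [hg, ← Polynomial.map_map]; exact hf.map _) (g s₀)
        (by
          have := hmem X _ h0
          rw [hg, ← Polynomial.map_map, RingHom.comp_apply, Polynomial.eval_map_apply]
          exact this)
        (by
          have := h1.map (ev X)
          rw [hg, ← Polynomial.map_map, RingHom.comp_apply, Polynomial.derivative_map,
            Polynomial.eval_map_apply]
          exact this)
        (by
          conv_lhs => rw [hQ]
          simp)
      have hlz : IsUnit (AdjoinRoot.lift g a (by rw [← Polynomial.eval_map]; exact ha1) z) := by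
        simp only [z]
        rw [Polynomial.aeval_def, Polynomial.hom_eval₂, AdjoinRoot.lift_root]
        rw [Polynomial.eval_map] at ha2
        convert ha2 using 2
        ext s
        simp
      refine ⟨IsLocalization.Away.lift z hlz, ?_, ?_⟩
      · ext s
        simp only [RingHom.comp_apply]
        rw [IsScalarTower.algebraMap_apply S (AdjoinRoot F) (Localization.Away z),
          IsLocalization.Away.lift_eq]
        simp
      · intro k hk
        have hk : k.comp (algebraMap S (Localization.Away z)) = g := hk
        apply IsLocalization.ringHom_ext (Submonoid.powers z)
        rw [IsLocalization.Away.lift_comp]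
        have e1 := hroot k
        have e2 := hz k
        rw [hk] at e1 e2
        apply AdjoinRoot.ringHom_ext
        · ext s
          have := RingHom.congr_fun hk s
          simp only [RingHom.comp_apply, AdjoinRoot.lift_of]
          exact this
        · simp only [RingHom.comp_apply, AdjoinRoot.lift_root]
          exact ha3 _ e1 e2)
    have e1 := hroot τ
    have e2 := hz τ
    rw [hτ] at e1 e2
    refine ⟨_, e1, ?_⟩
    set a := τ (algebraMap (AdjoinRoot F) _ (AdjoinRoot.root F))
    have h2 : (F.map σ).eval a = (a - σ s₀) * (Q.map σ).eval a + (F.map σ).eval (σ s₀) := by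
      conv_lhs => rw [hQ]
      simp [Polynomial.eval_map_apply]
    rw [e1] at h2
    have h3 : (a - σ s₀) * (Q.map σ).eval a ∈ K.map ρ := by
      have : (a - σ s₀) * (Q.map σ).eval a = - (F.map σ).eval (σ s₀) := by linear_combination -h2
      rw [this]; exact (K.map ρ).neg_mem h0
    exact (Ideal.mul_unit_mem_iff_mem _ e2).1 h3
  refine ⟨H, _, ρ, ⟨hhens, ?_⟩, hgen'⟩
  intro D _ J hD f hf
  let X : HU K := ⟨D, J, hD, f, hf⟩
  refine ⟨ev X, hρ X, ?_⟩
  intro g hg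
  ext x
  obtain ⟨S, _, α, h, σ, hσα, hr⟩ := hgen' {x}
  obtain ⟨s, rfl⟩ := hr x (by simp)
  have e1 := h.e_uniq X (g.comp σ) (by rw [RingHom.comp_assoc, hσα]; exact hg)
  have e2 := h.e_uniq X ((ev X).comp σ) (by rw [RingHom.comp_assoc, hσα, hρ])
  exact RingHom.congr_fun (e1.trans e2.symm) s


section colim

variable {A : Type u} [CommRing A] {I : Ideal A} {ι : Type u} [Preorder ι]
  {G : ι → Type u} [∀ i, CommRing (G i)]
  [∀ i, Algebra A (G i)] {f : ∀ i j, i ≤ j → G i →ₐ[A] G j}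
  {L : Type u} [CommRing L] {o : ∀ i, G i →+* L} {a : A →+* L}

theorem map_mem_stage (f : ∀ i j, i ≤ j → G i →ₐ[A] G j) {i j : ι} (h : i ≤ j) {x : G i}
    (hx : x ∈ I.map (algebraMap A (G i))) :
    f i j h x ∈ I.map (algebraMap A (G j)) := by
  have := Ideal.mem_map_of_mem (f i j h).toRingHom hx
  rwa [Ideal.map_map, AlgHom.toRingHom_eq_coe, AlgHom.comp_algebraMap] at this

structure IsColim (f : ∀ i j, i ≤ j → G i →ₐ[A] G j) (o : ∀ i, G i →+* L) (a : A →+* L) :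
    Prop where
  dir : ∀ i j : ι, ∃ k, i ≤ k ∧ j ≤ k
  ne : Nonempty ι
  ff : ∀ i j k (h : i ≤ j) (h' : j ≤ k) (x : G i),
    f j k h' (f i j h x) = f i k (h.trans h') x
  of_f : ∀ i j h x, o j (f i j h x) = o i x
  ex : ∀ z : L, ∃ i x, o i x = z
  zero : ∀ i x, o i x = 0 → ∃ j h, f i j h x = 0
  alg : ∀ i, (o i).comp (algebraMap A (G i)) = a

theorem IsColim.eq (H : IsColim f o a) {i j : ι} (x : G i) (y : G j) (h : o i x = o j y) :
    ∃ k, ∃ (hi : i ≤ k) (hj : j ≤ k), f i k hi x = f j k hj y := by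
  obtain ⟨k, hi, hj⟩ := H.dir i j
  obtain ⟨l, hl, e⟩ := H.zero k (f i k hi x - f j k hj y) (by
    rw [map_sub, H.of_f, H.of_f, h, sub_self])
  refine ⟨l, hi.trans hl, hj.trans hl, ?_⟩
  rw [map_sub, H.ff, H.ff, sub_eq_zero] at e
  exact e

theorem IsColim.mem (H : IsColim f o a) (x : L) (hx : x ∈ I.map a) :
    ∃ i, ∃ y ∈ I.map (algebraMap A (G i)), o i y = x := by
  obtain ⟨i₀⟩ := H.ne
  induction hx using Submodule.span_induction with
  | mem x hx =>
    obtain ⟨r, hr, rfl⟩ := hx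
    exact ⟨i₀, algebraMap A _ r, Ideal.mem_map_of_mem _ hr, RingHom.congr_fun (H.alg i₀) r⟩
  | zero => exact ⟨i₀, 0, Ideal.zero_mem _, map_zero _⟩
  | add x y _ _ hx hy =>
    obtain ⟨i, x, hx, rfl⟩ := hx
    obtain ⟨j, y, hy, rfl⟩ := hy
    obtain ⟨k, hi, hj⟩ := H.dir i j
    exact ⟨k, f i k hi x + f j k hj y, Ideal.add_mem _ (map_mem_stage f hi hx)
      (map_mem_stage f hj hy), by rw [map_add, H.of_f, H.of_f]⟩
  | smul c x _ hx =>
    obtain ⟨i, x, hx, rfl⟩ := hx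
    obtain ⟨j, c, rfl⟩ := H.ex c
    obtain ⟨k, hi, hj⟩ := H.dir i j
    exact ⟨k, f j k hj c * f i k hi x, Ideal.mul_mem_left _ _ (map_mem_stage f hi hx),
      by rw [map_mul, H.of_f, H.of_f, smul_eq_mul]⟩

theorem IsColim.mem' (H : IsColim f o a) {i : ι} (x : G i) (hx : o i x ∈ I.map a) :
    ∃ j, ∃ h : i ≤ j, f i j h x ∈ I.map (algebraMap A (G j)) := by
  obtain ⟨j, y, hy, e⟩ := H.mem _ hx
  obtain ⟨k, hj, hi, e'⟩ := H.eq _ _ e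
  exact ⟨k, hi, e' ▸ map_mem_stage f hj hy⟩

theorem IsColim.poly (H : IsColim f o a) (q : L[X]) : ∃ i, ∃ p : (G i)[X], p.map (o i) = q := by
  induction q using Polynomial.induction_on' with
  | add p q hp hq =>
    obtain ⟨i, p, rfl⟩ := hp
    obtain ⟨j, q, rfl⟩ := hq
    obtain ⟨k, hi, hj⟩ := H.dir i j
    refine ⟨k, p.map (f i k hi : G i →+* G k) + q.map (f j k hj : G j →+* G k), ?_⟩
    rw [Polynomial.map_add, Polynomial.map_map, Polynomial.map_map]
    congr 2 <;> ext x <;> exact H.of_f _ _ _ _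
  | monomial n z =>
    obtain ⟨i, x, rfl⟩ := H.ex z
    exact ⟨i, Polynomial.monomial n x, Polynomial.map_monomial _⟩

theorem IsColim.poly_stage (H : IsColim f o a) {i j : ι} (h : i ≤ j) (p : (G i)[X]) :
    (p.map (f i j h : G i →+* G j)).map (o j) = p.map (o i) := by
  rw [Polynomial.map_map]
  congr 1
  ext x
  exact H.of_f _ _ _ _

theorem IsColim.hens (H : IsColim f o a)
    (hG : ∀ i, HenselianRing (G i) (I.map (algebraMap A (G i)))) :
    HenselianRing L (I.map a) := by
  have hup : ∀ i, ∀ x ∈ I.map (algebraMap A (G i)), o i x ∈ I.map a := by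
    intro i x hx
    rw [← H.alg i, ← Ideal.map_map]
    exact Ideal.mem_map_of_mem _ hx
  refine ⟨?_, ?_⟩
  · intro x hx
    rw [Ideal.mem_jacobson_bot]
    intro y
    obtain ⟨i, x, hx', rfl⟩ := H.mem _ hx
    obtain ⟨j, y, rfl⟩ := H.ex y
    obtain ⟨k, hi, hj⟩ := H.dir i j
    have h1 := (hG k).jac (map_mem_stage f hi hx')
    rw [Ideal.mem_jacobson_bot] at h1
    have h2 := (h1 (f j k hj y)).map (o k)
    simpa [H.of_f] using h2
  · intro F hF a₀ h0 h1
    obtain ⟨w, hw⟩ := isUnit_iff_exists_inv.1 h1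
    obtain ⟨w, rfl⟩ := Ideal.Quotient.mk_surjective w
    rw [← map_mul, ← map_one (Ideal.Quotient.mk _), Ideal.Quotient.eq] at hw
    obtain ⟨i₁, P, hP⟩ := H.poly F
    obtain ⟨i₂, b, hb⟩ := H.ex a₀
    obtain ⟨i₃, w, rfl⟩ := H.ex w
    obtain ⟨i₄, h₁, h₂⟩ := H.dir i₁ i₂
    obtain ⟨i, h₄, h₃⟩ := H.dir i₄ i₃
    have hl : F ∈ Polynomial.lifts (o i) :=
      (Polynomial.mem_lifts _).2 ⟨_, (H.poly_stage (h₁.trans h₄) P).trans hP⟩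
    obtain ⟨Q, rfl, -, hQ⟩ := Polynomial.lifts_and_natDegree_eq_and_monic hl hF
    rw [← H.of_f _ _ (h₂.trans h₄)] at hb
    generalize f i₂ i (h₂.trans h₄) b = b at hb
    rw [← H.of_f _ _ h₃] at hw
    generalize f i₃ i h₃ w = w at hw
    subst hb
    rw [Polynomial.eval_map_apply] at h0
    rw [Polynomial.derivative_map, Polynomial.eval_map_apply, ← map_mul, ← map_one (o i),
      ← map_sub] at hw
    obtain ⟨j, hj, h0⟩ := H.mem' _ h0
    rw [← H.of_f _ _ hj] at hw
    obtain ⟨k, hk, hw⟩ := H.mem' _ hw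
    replace h0 := map_mem_stage f hk h0
    rw [H.ff] at h0 hw
    have hik := hj.trans hk
    let φ : G i →+* G k := (f i k hik : G i →+* G k)
    obtain ⟨r, hr, hr'⟩ := (hG k).is_henselian (Q.map φ) (hQ.map _) (φ b)
      (by rw [Polynomial.eval_map_apply]; exact h0)
      (by
        rw [isUnit_iff_exists_inv]
        refine ⟨Ideal.Quotient.mk _ (φ w), ?_⟩
        rw [← map_mul, ← map_one (Ideal.Quotient.mk _), Ideal.Quotient.eq,
          Polynomial.derivative_map, Polynomial.eval_map_apply, ← map_mul, ← map_one φ, ← map_sub]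
        exact hw)
    refine ⟨o k r, ?_, ?_⟩
    · rw [← H.poly_stage hik Q]
      exact hr.map
    · have := hup k _ hr'
      rw [map_sub] at this
      rwa [show o k (φ b) = o i b from H.of_f _ _ _ _] at this

theorem IsColim.bound (H : IsColim f o a) {T : Type*} [Finite T] (g : T → ι) :
    ∃ k, ∀ t, g t ≤ k := by
  have : IsDirected ι (· ≤ ·) := ⟨H.dir⟩
  have := H.ne
  exact Finite.exists_le g

theorem IsColim.fp_ex (H : IsColim f o a) {R : Type u} [CommRing R] {ψ : A →+* R}
    (hψ : ψ.FinitePresentation) (φ : R →+* L) (hφ : φ.comp ψ = a) :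
    ∃ i, ∃ r : R →+* G i, r.comp ψ = algebraMap A (G i) ∧ (o i).comp r = φ := by
  let := ψ.toAlgebra
  obtain ⟨n, p, hp, t, ht⟩ : Algebra.FinitePresentation A R := hψ
  choose i x hx using fun m => H.ex (φ (p (MvPolynomial.X m)))
  obtain ⟨j, hj⟩ := H.bound i
  have key : ∀ k, ∀ h : j ≤ k,
      (o k).comp (MvPolynomial.aeval (fun m => f j k h (f _ j (hj m) (x m))) :
        MvPolynomial (Fin n) A →ₐ[A] G k).toRingHom = φ.comp p.toRingHom := by
    intro k h
    apply MvPolynomial.ringHom_ext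
    · intro r
      have e1 := RingHom.congr_fun (H.alg k) r
      have e2 := RingHom.congr_fun hφ r
      have e3 : p (MvPolynomial.C r) = ψ r := p.commutes r
      simp only [RingHom.comp_apply] at e1 e2
      simp [e3, e1, e2]
    · intro m
      simp [H.of_f, hx]
  have hk : ∀ s : t, ∃ k, ∃ h : j ≤ k, f j k h (MvPolynomial.aeval (fun m => f _ j (hj m) (x m)) s.1) = 0 := by
    intro s
    apply H.zero
    have h1 := RingHom.congr_fun (key j le_rfl) s.1
    have h2 : p s.1 = 0 := by
      have : s.1 ∈ RingHom.ker p.toRingHom := ht ▸ Ideal.subset_span s.2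
      exact this
    simp only [RingHom.comp_apply, AlgHom.toRingHom_eq_coe, RingHom.coe_coe, h2, map_zero] at h1
    rw [← h1, ← H.of_f _ _ (le_refl j)]
    congr 1
    simp only [MvPolynomial.aeval_def, MvPolynomial.eval₂_eq', map_sum, map_mul, map_prod, map_pow,
      AlgHom.commutes]
  choose k hjk hk using hk
  obtain ⟨l, hl⟩ := H.bound (fun s : Option t => s.elim j k)
  have hjl : j ≤ l := hl none
  let y : MvPolynomial (Fin n) A →ₐ[A] G l :=
    MvPolynomial.aeval (fun m => f j l hjl (f _ j (hj m) (x m)))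
  have hy : y = (f j l hjl).comp (MvPolynomial.aeval (fun m => f _ j (hj m) (x m))) := by
    apply MvPolynomial.algHom_ext
    intro m
    simp [y]
  have hker : RingHom.ker p.toRingHom ≤ RingHom.ker y.toRingHom := by
    rw [← ht]
    apply Ideal.span_le.2
    intro s hs
    change y s = 0
    rw [hy]
    have h1 := hk ⟨s, hs⟩
    have h2 : k ⟨s, hs⟩ ≤ l := hl (some ⟨s, hs⟩)
    rw [AlgHom.comp_apply, ← H.ff _ _ _ (hjk ⟨s, hs⟩) h2, h1, map_zero]
  have hp' : Function.Surjective p.toRingHom := hp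
  let r := RingHom.liftOfSurjective p.toRingHom hp' ⟨y.toRingHom, hker⟩
  have hr : r.comp p.toRingHom = y.toRingHom := RingHom.liftOfRightInverse_comp _ _ _ _
  refine ⟨l, r, ?_, ?_⟩
  · ext c
    have h1 := RingHom.congr_fun hr (MvPolynomial.C c)
    have e3 : p.toRingHom (MvPolynomial.C c) = ψ c := p.commutes c
    rw [RingHom.comp_apply, e3] at h1
    rw [RingHom.comp_apply, h1]
    exact y.commutes c
  · have h1 := key l hjl
    ext c
    obtain ⟨c, rfl⟩ := hp' c
    have h2 := RingHom.congr_fun h1 c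
    have h3 := RingHom.congr_fun hr c
    simp only [RingHom.comp_apply] at h2 h3 ⊢
    rw [h3, ← h2]

theorem IsColim.fp_eq (H : IsColim f o a) {R : Type u} [CommRing R] {ψ : A →+* R}
    (hψ : ψ.FinitePresentation) {i j : ι} (r : R →+* G i) (s : R →+* G j)
    (hr : r.comp ψ = algebraMap A (G i)) (hs : s.comp ψ = algebraMap A (G j))
    (h : (o i).comp r = (o j).comp s) :
    ∃ k, ∃ (hi : i ≤ k) (hj : j ≤ k),
      (f i k hi : G i →+* G k).comp r = (f j k hj : G j →+* G k).comp s := by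
  let := ψ.toAlgebra
  obtain ⟨n, p, hp, -⟩ : Algebra.FinitePresentation A R := hψ
  choose k hi hj hk using fun m =>
    H.eq (r (p (MvPolynomial.X m))) (s (p (MvPolynomial.X m))) (RingHom.congr_fun h _)
  obtain ⟨l₀, h0, h0'⟩ := H.dir i j
  obtain ⟨l, hl⟩ := H.bound (fun s : Option (Fin n) => s.elim l₀ k)
  have hil : i ≤ l := h0.trans (hl none)
  have hjl : j ≤ l := h0'.trans (hl none)
  refine ⟨l, hil, hjl, ?_⟩
  have hp' : Function.Surjective p.toRingHom := hp
  rw [← RingHom.cancel_right hp']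
  apply MvPolynomial.ringHom_ext
  · intro c
    have e3 : p.toRingHom (MvPolynomial.C c) = ψ c := p.commutes c
    have e1 := RingHom.congr_fun hr c
    have e2 := RingHom.congr_fun hs c
    simp only [RingHom.comp_apply] at e1 e2 ⊢
    rw [e3, e1, e2]
    simp
  · intro m
    have h2 : k m ≤ l := hl (some m)
    have h3 := congrArg (f _ _ h2) (hk m)
    rw [H.ff, H.ff] at h3
    exact h3

end colim


theorem hlift {A R H : Type u} [CommRing A] [CommRing R] [CommRing H] {I : Ideal A}
    {ψ : A →+* R} {ρ : R →+* H} (hH : IsHenselization (I.map ψ) ρ)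
    {C : Type u} [CommRing C] {c : A →+* C} (hC : HenselianRing C (I.map c))
    (φ : R →+* C) (hφ : φ.comp ψ = c) : ∃! g : H →+* C, g.comp ρ = φ :=
  hH.2 C (I.map c) hC φ (by rw [Ideal.map_map, hφ])

theorem hfp_of_retract {A B R H : Type u} [CommRing A] [CommRing B] [CommRing R] [CommRing H]
    {I : Ideal A} {φ : A →+* B} (hB : HenselianRing B (I.map φ))
    {ψ : A →+* R} (hψ : ψ.FinitePresentation) {ρ : R →+* H}
    (hH : IsHenselization (I.map ψ) ρ)
    (hfin : ∀ t : Finset H, ∃ (S : Type u) (_ : CommRing S) (α : R →+* S) (_ : IsW (I.map ψ) α)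
        (σ : S →+* H), σ.comp α = ρ ∧ ∀ x ∈ t, x ∈ Set.range σ)
    (π : H →+* B) (s : B →+* H) (hπs : π.comp s = RingHom.id B)
    (hπ : π.comp (ρ.comp ψ) = φ) (hs : s.comp φ = ρ.comp ψ) : IsHfp φ I := by
  classical
  obtain ⟨t, ht⟩ : ∃ t : Finset R, ∀ (C : Type u) [CommRing C] (g h : R →+* C),
      g.comp ψ = h.comp ψ → (∀ x ∈ t, g x = h x) → g = h := by
    let := ψ.toAlgebra
    have hfp : Algebra.FinitePresentation A R := hψ
    obtain ⟨t, ht⟩ := (inferInstance : Algebra.FiniteType A R)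
    refine ⟨t, fun C _ g h h1 h2 => ?_⟩
    let := (g.comp ψ).toAlgebra
    let ga : R →ₐ[A] C := ⟨g, fun r => rfl⟩
    let ha : R →ₐ[A] C := ⟨h, fun r => (RingHom.congr_fun h1 r).symm⟩
    have : ga = ha := AlgHom.ext_of_adjoin_eq_top ht (fun x hx => h2 x hx)
    exact congrArg AlgHom.toRingHom this
  obtain ⟨S, _, α, hW, σ, hσ, hr⟩ := hfin (t.image (fun x => s (π (ρ x))))
  have hy : ∀ x : t, ∃ y, σ y = s (π (ρ x.1)) := fun x =>
    hr _ (Finset.mem_image_of_mem _ x.2)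
  choose y hy using hy
  let b : Ideal S := Ideal.span (Set.range fun x : t => α x.1 - y x)
  have hb : b.FG := Submodule.fg_span (Set.finite_range _)
  have hπs' : ∀ x, π (s x) = x := fun x => RingHom.congr_fun hπs x
  have hσ' : ∀ x, σ (α x) = ρ x := fun x => RingHom.congr_fun hσ x
  have hker : ∀ x ∈ b, (π.comp σ) x = 0 := by
    have : b ≤ RingHom.ker (π.comp σ) := by
      apply Ideal.span_le.2
      rintro _ ⟨x, rfl⟩
      change π (σ _) = 0
      rw [map_sub, hσ', hy, map_sub, hπs', sub_self]
    exact this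
  let ρT : S ⧸ b →+* B := Ideal.Quotient.lift b (π.comp σ) hker
  have hρT : ρT.comp (Ideal.Quotient.mk b) = π.comp σ := by ext; simp [ρT]
  have hcomp : ρT.comp ((Ideal.Quotient.mk b).comp (α.comp ψ)) = φ := by
    rw [← RingHom.comp_assoc, hρT]
    change π.comp ((σ.comp α).comp ψ) = φ
    rw [hσ, hπ]
  refine ⟨S ⧸ b, inferInstance, (Ideal.Quotient.mk b).comp (α.comp ψ), ρT, ?_, hcomp, ?_, ?_⟩
  · exact (hW.fp.comp hψ).comp_surjective Ideal.Quotient.mk_surjective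
      (by rw [Ideal.mk_ker]; exact hb)
  · rw [Ideal.map_map, hcomp]
    exact hB
  · intro C _ J hC g hg
    have hgJ : (I.map ψ).map (g.comp ((Ideal.Quotient.mk b).comp α)) ≤ J := by
      rw [Ideal.map_map] at hg ⊢
      exact hg
    obtain ⟨q, hq, hqu⟩ := hH.2 C J hC _ hgJ
    have hq : q.comp ρ = g.comp ((Ideal.Quotient.mk b).comp α) := hq
    have hqσ : q.comp σ = g.comp (Ideal.Quotient.mk b) := by
      let X : HU (I.map ψ) := ⟨C, J, hC, _, hgJ⟩
      rw [hW.e_uniq X (q.comp σ) (by rw [RingHom.comp_assoc, hσ]; exact hq)]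
      exact (hW.e_uniq X (g.comp (Ideal.Quotient.mk b)) rfl).symm
    have hqe : q.comp (s.comp π) = q := by
      apply (hqu _ _).trans
      · exact (hqu _ hq).symm
      change (q.comp (s.comp π)).comp ρ = _
      rw [← hq]
      apply ht
      · rw [RingHom.comp_assoc, RingHom.comp_assoc, RingHom.comp_assoc, RingHom.comp_assoc, hπ, hs]
      · intro x hx
        have h1 : q (σ (y ⟨x, hx⟩)) = q (σ (α x)) := by
          have e1 := RingHom.congr_fun hqσ (y ⟨x, hx⟩)
          have e2 := RingHom.congr_fun hqσ (α x)
          simp only [RingHom.comp_apply] at e1 e2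
          rw [e1, e2]
          congr 1
          symm
          apply Ideal.Quotient.eq.2
          exact Ideal.subset_span ⟨⟨x, hx⟩, rfl⟩
        rw [hy, hσ'] at h1
        exact h1
    refine ⟨q.comp s, ?_, ?_⟩
    · change (q.comp s).comp ρT = g
      rw [← RingHom.cancel_right (Ideal.Quotient.mk_surjective (I := b)), RingHom.comp_assoc, hρT,
        ← hqσ]
      change (q.comp (s.comp π)).comp σ = q.comp σ
      rw [hqe]
    · intro k hk
      have hk : k.comp ρT = g := hk
      have : k.comp π = q := by
        apply hqu
        change (k.comp π).comp ρ = _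
        rw [← hσ]
        change (k.comp (π.comp σ)).comp α = _
        rw [← hρT, ← hk]
        rfl
      rw [← this, RingHom.comp_assoc, hπs]
      rfl

theorem isColim_directLimit {A : Type u} [CommRing A] {ι : Type u} [Preorder ι]
    (hd : IsDirected ι (· ≤ ·)) (hne : Nonempty ι)
    {G : ι → Type u} [∀ i, CommRing (G i)]
    [∀ i, Algebra A (G i)] (f : ∀ i j, i ≤ j → G i →ₐ[A] G j)
    (hf : DirectedSystem G (fun i j h => (f i j h : G i → G j))) (i₀ : ι) :
    IsColim f (Ring.DirectLimit.of G (fun i j h => (f i j h : G i → G j)))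
      ((Ring.DirectLimit.of G (fun i j h => (f i j h : G i → G j)) i₀).comp
        (algebraMap A (G i₀))) where
  dir := hd.directed
  ne := hne
  ff i j k h h' x := hf.map_map h h' x
  of_f i j h x := Ring.DirectLimit.of_f (f := fun i j h => (f i j h : G i → G j)) h x
  ex z := Ring.DirectLimit.exists_of z
  zero i x hx := by
    have : DirectedSystem G (fun i j h => ((f i j h : G i →+* G j) : G i → G j)) := hf
    exact Ring.DirectLimit.of.zero_exact (f' := fun i j h => (f i j h : G i →+* G j)) hx
  alg i := by
    obtain ⟨k, h1, h2⟩ := hd.directed i i₀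
    ext r
    have e1 := Ring.DirectLimit.of_f (f := fun i j h => (f i j h : G i → G j)) h1 (algebraMap A _ r)
    have e2 := Ring.DirectLimit.of_f (f := fun i j h => (f i j h : G i → G j)) h2 (algebraMap A _ r)
    simp only [AlgHom.commutes] at e1 e2
    exact e1.symm.trans e2


structure Idx (A B : Type u) [CommRing A] [CommRing B] [Algebra A B] : Type u where
  F : Finset B
  a : Ideal (MvPolynomial {x // x ∈ F} A)
  fg : a.FG
  le : ∀ p ∈ a, MvPolynomial.aeval (fun x : {x // x ∈ F} => x.1) p = (0 : B)

section idx

variable {A B : Type u} [CommRing A] [CommRing B] [Algebra A B]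

def incl {F F' : Finset B} (h : F ⊆ F') : {x // x ∈ F} → {x // x ∈ F'} := fun x => ⟨x.1, h x.2⟩

noncomputable def ren {F F' : Finset B} (h : F ⊆ F') :
    MvPolynomial {x // x ∈ F} A →+* MvPolynomial {x // x ∈ F'} A :=
  (MvPolynomial.rename (incl h)).toRingHom

theorem ren_ren {F F' F'' : Finset B} (h : F ⊆ F') (h' : F' ⊆ F'') :
    (ren (A := A) h').comp (ren h) = ren (h.trans h') := by
  ext x <;> simp [ren, incl]

theorem ren_self {F : Finset B} (h : F ⊆ F) : ren (A := A) h = RingHom.id _ := by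
  ext x <;> simp [ren, incl]

noncomputable instance : Preorder (Idx A B) where
  le j k := ∃ h : j.F ⊆ k.F, j.a.map (ren h) ≤ k.a
  le_refl j := ⟨le_rfl, by rw [ren_self, Ideal.map_id]⟩
  le_trans i j k := by
    rintro ⟨h, h1⟩ ⟨h', h2⟩
    refine ⟨h.trans h', ?_⟩
    rw [← ren_ren h h', ← Ideal.map_map]
    exact (Ideal.map_mono h1).trans h2

abbrev Idx.R (j : Idx A B) : Type u := MvPolynomial {x // x ∈ j.F} A ⧸ j.a

noncomputable def Idx.t {j k : Idx A B} (h : j ≤ k) : j.R →+* k.R :=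
  Ideal.quotientMap k.a (ren h.1) (Ideal.map_le_iff_le_comap.1 h.2)

theorem Idx.t_mk {j k : Idx A B} (h : j ≤ k) (p) :
    Idx.t h (Ideal.Quotient.mk j.a p) = Ideal.Quotient.mk k.a (ren h.1 p) := rfl

noncomputable def Idx.b (j : Idx A B) : j.R →+* B :=
  Ideal.Quotient.lift j.a (MvPolynomial.aeval (fun x : {x // x ∈ j.F} => x.1) :
    MvPolynomial {x // x ∈ j.F} A →ₐ[A] B).toRingHom j.le

theorem Idx.b_mk (j : Idx A B) (p) : j.b (Ideal.Quotient.mk j.a p) =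
    MvPolynomial.aeval (fun x : {x // x ∈ j.F} => x.1) p := rfl

theorem Idx.t_t {i j k : Idx A B} (h : i ≤ j) (h' : j ≤ k) :
    (Idx.t h').comp (Idx.t h) = Idx.t (h.trans h') := by
  apply Ideal.Quotient.ringHom_ext
  ext p : 1
  · ext p
    simp [Idx.t_mk, ren]
  · simp [Idx.t_mk, ren, incl]

theorem Idx.t_self {j : Idx A B} (h : j ≤ j) : Idx.t h = RingHom.id _ := by
  apply Ideal.Quotient.ringHom_ext
  ext p : 1
  · ext p
    simp [Idx.t_mk, ren]
  · simp [Idx.t_mk, ren, incl]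

theorem Idx.t_b {j k : Idx A B} (h : j ≤ k) : k.b.comp (Idx.t h) = j.b := by
  apply Ideal.Quotient.ringHom_ext
  ext p : 1
  · ext p
    simp [Idx.t_mk, ren, Idx.b_mk]
  · simp [Idx.t_mk, ren, incl, Idx.b_mk]

theorem Idx.t_alg {j k : Idx A B} (h : j ≤ k) :
    (Idx.t h).comp (algebraMap A j.R) = algebraMap A k.R := by
  ext r
  change Ideal.Quotient.mk k.a (ren h.1 (MvPolynomial.C r)) = Ideal.Quotient.mk k.a (MvPolynomial.C r)
  simp [ren]

theorem Idx.b_alg (j : Idx A B) : j.b.comp (algebraMap A j.R) = algebraMap A B := by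
  ext r
  change MvPolynomial.aeval (fun x : {x // x ∈ j.F} => x.1) (MvPolynomial.C r) = _
  simp

theorem Idx.fp (j : Idx A B) : (algebraMap A j.R).FinitePresentation := by
  rw [RingHom.finitePresentation_algebraMap]
  exact Algebra.FinitePresentation.quotient j.fg

theorem ren_val {F F' : Finset B} (h : F ⊆ F') (p : MvPolynomial {x // x ∈ F} A) :
    MvPolynomial.aeval (fun x : {x // x ∈ F'} => x.1) (ren h p) =
      MvPolynomial.aeval (fun x : {x // x ∈ F} => x.1) p := by
  simp only [ren, AlgHom.toRingHom_eq_coe, RingHom.coe_coe, MvPolynomial.aeval_rename]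
  rfl

theorem Idx.dir : IsDirected (Idx A B) (· ≤ ·) := by
  classical
  constructor
  intro i j
  have hi : i.F ⊆ i.F ∪ j.F := Finset.subset_union_left
  have hj : j.F ⊆ i.F ∪ j.F := Finset.subset_union_right
  refine ⟨⟨i.F ∪ j.F, i.a.map (ren hi) ⊔ j.a.map (ren hj), ?_, ?_⟩, ⟨hi, le_sup_left⟩, ⟨hj, le_sup_right⟩⟩
  · exact Submodule.FG.sup (i.fg.map _) (j.fg.map _)
  · have : i.a.map (ren hi) ⊔ j.a.map (ren hj) ≤ RingHom.ker
        (MvPolynomial.aeval (fun x : {x // x ∈ i.F ∪ j.F} => x.1) :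
          MvPolynomial {x // x ∈ i.F ∪ j.F} A →ₐ[A] B).toRingHom := by
      apply sup_le
      · apply Ideal.map_le_iff_le_comap.2
        intro p hp
        exact (ren_val hi p).trans (i.le p hp)
      · apply Ideal.map_le_iff_le_comap.2
        intro p hp
        exact (ren_val hj p).trans (j.le p hp)
    exact this

noncomputable def Idx.single (x : B) : Idx A B := ⟨{x}, ⊥, Submodule.fg_bot, by simp⟩

theorem Idx.single_le (x : B) (j : Idx A B) (h : x ∈ j.F) : Idx.single x ≤ j :=
  ⟨by simpa [Idx.single] using h, (Ideal.map_bot (f := ren _)).le.trans bot_le⟩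

end idx

theorem backward {A B : Type u} [CommRing A] [CommRing B] [Algebra A B]
    (I : Ideal A) [hB : HenselianRing B (I.map (algebraMap A B))]
    (hyp : ∀ (ι : Type u) (_ : Preorder ι), IsDirected ι (· ≤ ·) → Nonempty ι →
        ∀ (G : ι → Type u) (_ : ∀ i, CommRing (G i)) (_ : ∀ i, Algebra A (G i))
          (f : ∀ i j, i ≤ j → G i →ₐ[A] G j),
          DirectedSystem G (fun i j h => (f i j h : G i → G j)) →
          (∀ i, HenselianRing (G i) (I.map (algebraMap A (G i)))) →
          (∀ u : B →+* Ring.DirectLimit G (fun i j h => (f i j h : G i → G j)),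
              (∀ i, u.comp (algebraMap A B) =
                (Ring.DirectLimit.of G (fun i j h => (f i j h : G i → G j)) i).comp
                  (algebraMap A (G i))) →
              ∃ i, ∃ g : B →ₐ[A] G i,
                (Ring.DirectLimit.of G (fun i j h => (f i j h : G i → G j)) i).comp
                  g.toRingHom = u)) :
    IsHfp (algebraMap A B) I := by
  choose H hring ρ hH hfin using fun j : Idx A B => exists_hens (I.map (algebraMap A j.R))
  let halg : ∀ j, Algebra A (H j) := fun j => ((ρ j).comp (algebraMap A j.R)).toAlgebra
  have halg' : ∀ j, algebraMap A (H j) = (ρ j).comp (algebraMap A j.R) := fun j => rfl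
  have hens : ∀ j, HenselianRing (H j) (I.map (algebraMap A (H j))) := by
    intro j
    rw [halg', ← Ideal.map_map]
    exact (hH j).1
  have hT : ∀ j k (h : j ≤ k), ∃! g : H j →+* H k, g.comp (ρ j) = (ρ k).comp (Idx.t h) := by
    intro j k h
    apply hlift (hH j) (hens k)
    rw [RingHom.comp_assoc, Idx.t_alg, halg']
  choose g hg hgu using hT
  have hg : ∀ j k h, (g j k h).comp (ρ j) = (ρ k).comp (Idx.t h) := hg
  let f : ∀ j k, j ≤ k → H j →ₐ[A] H k := fun j k h => ⟨g j k h, fun r => by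
    have h1 := RingHom.congr_fun (hg j k h) (algebraMap A j.R r)
    have h2 := RingHom.congr_fun (Idx.t_alg h) r
    simp only [RingHom.comp_apply] at h1 h2
    rw [h2] at h1
    exact h1⟩
  have hself : ∀ j (h : j ≤ j), g j j h = RingHom.id _ := by
    intro j h
    symm
    apply hgu
    simp [Idx.t_self]
  have hcomp : ∀ i j k (h : i ≤ j) (h' : j ≤ k),
      (g j k h').comp (g i j h) = g i k (h.trans h') := by
    intro i j k h h'
    apply hgu
    change (g j k h').comp ((g i j h).comp (ρ i)) = _
    rw [hg, ← RingHom.comp_assoc, hg, RingHom.comp_assoc, Idx.t_t]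
  have hds : DirectedSystem H (fun i j h => (f i j h : H i → H j)) :=
    ⟨fun j x => RingHom.congr_fun (hself j le_rfl) x,
      fun _ _ _ h h' x => RingHom.congr_fun (hcomp _ _ _ h h') x⟩
  have hne : Nonempty (Idx A B) := ⟨Idx.single 0⟩
  let L := Ring.DirectLimit H (fun i j h => (f i j h : H i → H j))
  let o : ∀ j, H j →+* L := Ring.DirectLimit.of H (fun i j h => (f i j h : H i → H j))
  let a : A →+* L := (o (Idx.single 0)).comp (algebraMap A _)
  have hcol : IsColim f o a := isColim_directLimit Idx.dir hne f hds _
  have hπ : ∀ j, ∃! π : H j →+* B, π.comp (ρ j) = j.b := fun j => hlift (hH j) hB _ (Idx.b_alg j)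
  choose π hπ hπu using hπ
  have hπ : ∀ j, (π j).comp (ρ j) = j.b := hπ
  have hπg : ∀ i j h, (π j).comp (g i j h) = π i := by
    intro i j h
    apply hπu
    change (π j).comp ((g i j h).comp (ρ i)) = _
    rw [hg, ← RingHom.comp_assoc, hπ, Idx.t_b]
  let lam : L →+* B := Ring.DirectLimit.lift H (fun i j h => (f i j h : H i → H j)) B π
    (fun i j h x => RingHom.congr_fun (hπg i j h) x)
  have hlam : ∀ j x, lam (o j x) = π j x := fun j x => Ring.DirectLimit.lift_of _ _ _ _ _
  let xx : B → L := fun x => o (Idx.single x) (ρ (Idx.single x)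
    (Ideal.Quotient.mk _ (MvPolynomial.X ⟨x, Finset.mem_singleton_self x⟩)))
  let θ : MvPolynomial B A →+* L := MvPolynomial.eval₂Hom a xx
  have hθ : ∀ (j : Idx A B) p, θ (MvPolynomial.rename (fun x : {x // x ∈ j.F} => x.1) p) =
      o j (ρ j (Ideal.Quotient.mk j.a p)) := by
    intro j p
    have : θ.comp (MvPolynomial.rename (fun x : {x // x ∈ j.F} => x.1) :
        MvPolynomial {x // x ∈ j.F} A →ₐ[A] _).toRingHom =
        (o j).comp ((ρ j).comp (Ideal.Quotient.mk j.a)) := by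
      apply MvPolynomial.ringHom_ext
      · intro r
        have h1 := RingHom.congr_fun (hcol.alg j) r
        simp only [RingHom.comp_apply, AlgHom.toRingHom_eq_coe, RingHom.coe_coe,
          MvPolynomial.rename_C, θ, MvPolynomial.eval₂Hom_C]
        exact h1.symm
      · rintro ⟨x, hx⟩
        simp only [RingHom.comp_apply, AlgHom.toRingHom_eq_coe, RingHom.coe_coe,
          MvPolynomial.rename_X, θ, MvPolynomial.eval₂Hom_X', xx]
        have hle := Idx.single_le x j hx
        rw [← hcol.of_f _ _ hle]
        congr 1
        refine (RingHom.congr_fun (hg _ _ hle) _).trans ?_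
        rw [RingHom.comp_apply, Idx.t_mk]
        simp [ren, incl]
    exact RingHom.congr_fun this p
  let e : MvPolynomial B A →+* B := (MvPolynomial.aeval (fun x : B => x) :
    MvPolynomial B A →ₐ[A] B).toRingHom
  have he : Function.Surjective e := fun x => ⟨MvPolynomial.X x, by simp [e]⟩
  have hker : RingHom.ker e ≤ RingHom.ker θ := by
    intro p hp
    obtain ⟨s, q, rfl⟩ := MvPolynomial.exists_finset_rename p
    have hq : MvPolynomial.aeval (fun x : {x // x ∈ s} => x.1) q = (0 : B) := by
      have h1 : e _ = 0 := hp
      simp only [e, AlgHom.toRingHom_eq_coe, RingHom.coe_coe, MvPolynomial.aeval_rename] at h1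
      exact h1
    let j : Idx A B := ⟨s, Ideal.span {q}, Submodule.fg_span_singleton q, by
      intro p hp
      obtain ⟨c, rfl⟩ := Ideal.mem_span_singleton.1 hp
      rw [map_mul, hq, zero_mul]⟩
    have h2 := hθ j q
    rw [Ideal.Quotient.eq_zero_iff_mem.2 (Ideal.mem_span_singleton_self q), map_zero, map_zero] at h2
    exact h2
  let u : B →+* L := RingHom.liftOfSurjective e he ⟨θ, hker⟩
  have hu' : u.comp e = θ := RingHom.liftOfRightInverse_comp _ _ _ _
  have hu : ∀ p, u (e p) = θ p := fun p => RingHom.congr_fun hu' p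
  have hua : u.comp (algebraMap A B) = a := by
    ext r
    have h1 := hu (MvPolynomial.C r)
    simpa [e, θ] using h1
  have hlu : ∀ x, lam (u x) = x := by
    intro x
    have h1 := hu (MvPolynomial.X x)
    have h2 : e (MvPolynomial.X x) = x := by simp [e]
    have h3 : θ (MvPolynomial.X x) = xx x := by simp [θ]
    rw [h2, h3] at h1
    rw [h1]
    simp only [xx]
    rw [hlam]
    refine (RingHom.congr_fun (hπ _) _).trans ?_
    rw [Idx.b_mk]
    simp
  obtain ⟨j, s, hs⟩ := hyp (Idx A B) inferInstance Idx.dir hne H hring halg f hds hens u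
    (fun j => hua.trans (hcol.alg j).symm)
  have hs : (o j).comp s.toRingHom = u := hs
  refine hfp_of_retract hB j.fp (hH j) (hfin j) (π j) s.toRingHom ?_ ?_ ?_
  · ext x
    have h1 := RingHom.congr_fun hs x
    rw [RingHom.comp_apply] at h1
    rw [RingHom.comp_apply, ← hlam, h1, hlu]
    rfl
  · rw [← RingHom.comp_assoc, hπ, Idx.b_alg]
  · ext r
    exact s.commutes r

theorem forward {A B : Type u} [CommRing A] [CommRing B] [Algebra A B]
    (I : Ideal A) (hyp : IsHfp (algebraMap A B) I)
    {ι : Type u} [Preorder ι]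
    {G : ι → Type u} [∀ i, CommRing (G i)]
    [∀ i, Algebra A (G i)] {f : ∀ i j, i ≤ j → G i →ₐ[A] G j}
    {L : Type u} [CommRing L] {o : ∀ i, G i →+* L} {a : A →+* L} (hc : IsColim f o a)
    (hG : ∀ i, HenselianRing (G i) (I.map (algebraMap A (G i)))) :
    (∀ u : B →+* L, u.comp (algebraMap A B) = a →
        ∃ i, ∃ g : B →ₐ[A] G i, (o i).comp g.toRingHom = u) ∧
      ∀ (i j : ι) (g : B →ₐ[A] G i) (h : B →ₐ[A] G j),
        (o i).comp g.toRingHom = (o j).comp h.toRingHom →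
          ∃ (k : ι) (hik : i ≤ k) (hjk : j ≤ k), (f i k hik).comp g = (f j k hjk).comp h := by
  obtain ⟨R, _, ψ, ρ, hfp, hρψ, hH⟩ := hyp
  constructor
  · intro u hu
    obtain ⟨i, r, hr1, hr2⟩ := hc.fp_ex hfp (u.comp ρ) (by rw [RingHom.comp_assoc, hρψ, hu])
    obtain ⟨g, hg, -⟩ := hlift hH (hG i) r hr1
    have hg : g.comp ρ = r := hg
    refine ⟨i, ⟨g, fun c => ?_⟩, ?_⟩
    · rw [← hr1, ← hg, ← hρψ]; rfl
    · refine (hlift hH (hc.hens hG) (u.comp ρ) (by rw [RingHom.comp_assoc, hρψ, hu])).unique ?_ rfl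
      change (o i).comp (g.comp ρ) = _
      rw [hg, hr2]
  · intro i j g h hgh
    have h1 : (g.toRingHom.comp ρ).comp ψ = algebraMap A (G i) := by
      rw [RingHom.comp_assoc, hρψ]; exact g.comp_algebraMap
    have h2 : (h.toRingHom.comp ρ).comp ψ = algebraMap A (G j) := by
      rw [RingHom.comp_assoc, hρψ]; exact h.comp_algebraMap
    obtain ⟨k, hi, hj, e⟩ := hc.fp_eq hfp (g.toRingHom.comp ρ) (h.toRingHom.comp ρ) h1 h2
      (by rw [← RingHom.comp_assoc, hgh, RingHom.comp_assoc])
    refine ⟨k, hi, hj, ?_⟩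
    have := (hlift hH (hG k) ((f i k hi : G i →+* G k).comp (g.toRingHom.comp ρ)) (by
      rw [RingHom.comp_assoc, h1]; exact (f i k hi).comp_algebraMap)).unique
      (y₁ := (f i k hi : G i →+* G k).comp g.toRingHom)
      (y₂ := (f j k hj : G j →+* G k).comp h.toRingHom) rfl e.symm
    ext x
    exact RingHom.congr_fun this x

end HfpAux

/-- Grothendieck-style functorial criterion for hfp maps: `B` is hfp over a Henselian pair
`(A, I)` iff for every nonempty directed system of `A`-algebras which are Henselian along `I`,
the map `colim Hom_A(B, R_i) → Hom_A(B, colim R_i)` is bijective. -/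
theorem isHfp_iff_functorial
    {A B : Type u} [CommRing A] [CommRing B] [Algebra A B]
    (I : Ideal A) [HenselianRing A I]
    [HenselianRing B (I.map (algebraMap A B))] :
    IsHfp (algebraMap A B) I ↔
      ∀ (ι : Type u) (_ : Preorder ι), IsDirected ι (· ≤ ·) → Nonempty ι →
        ∀ (G : ι → Type u) (_ : ∀ i, CommRing (G i)) (_ : ∀ i, Algebra A (G i))
          (f : ∀ i j, i ≤ j → G i →ₐ[A] G j),
          DirectedSystem G (fun i j h => (f i j h : G i → G j)) →
          (∀ i, HenselianRing (G i) (I.map (algebraMap A (G i)))) →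
          ((∀ u : B →+* Ring.DirectLimit G (fun i j h => (f i j h : G i → G j)),
              (∀ i, u.comp (algebraMap A B) =
                (Ring.DirectLimit.of G (fun i j h => (f i j h : G i → G j)) i).comp
                  (algebraMap A (G i))) →
              ∃ i, ∃ g : B →ₐ[A] G i,
                (Ring.DirectLimit.of G (fun i j h => (f i j h : G i → G j)) i).comp
                  g.toRingHom = u) ∧
            ∀ (i j : ι) (g : B →ₐ[A] G i) (h : B →ₐ[A] G j),
              (Ring.DirectLimit.of G (fun i j h => (f i j h : G i → G j)) i).comp g.toRingHom =
                (Ring.DirectLimit.of G (fun i j h => (f i j h : G i → G j)) j).comp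
                  h.toRingHom →
              ∃ (k : ι) (hik : i ≤ k) (hjk : j ≤ k),
                (f i k hik).comp g = (f j k hjk).comp h) := by
  constructor
  · intro hyp ι _ hd hne G _ _ f hf hG
    obtain ⟨i₀⟩ := hne
    have hc := HfpAux.isColim_directLimit hd ⟨i₀⟩ f hf i₀
    obtain ⟨h1, h2⟩ := HfpAux.forward I hyp hc hG
    exact ⟨fun u hu => h1 u (hu i₀), h2⟩
  · intro hyp
    exact HfpAux.backward I fun ι hp hd hne G hr ha f hf hG =>
      (hyp ι hp hd hne G hr ha f hf hG).1
end
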